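/- Let d ≥ 1, let ω ∈ ℝ^d be nonresonant, let f : ℝ^d → ℝ be real analytic and 2π-periodic in each coordinate with mean value f₀, let g : ℝ → ℝ be real analytic, and let c₀ ∈ ℝ satisfy g(c₀) = f₀ and g'(c₀) > 0. Then there exists ε₀ > 0 such that for every ε ∈ (0, ε₀) there is a quasi-periodic solution x₀(t) = c₀ + X_ε(ωt) of ε x'' + x' + ε g(x) = ε f(ωt), with X_ε real analytic and 2π-periodic in each coordinate, which is locally attractive: there is a neighbourhood U of (c₀, 0) in ℝ² such that every solution y of the same equation with (y(0), y'(0)) ∈ U satisfies |y(t) − x₀(t)| + |y'(t) − x₀'(t)| → 0 as t → +∞. In particular x₀ is the unique quasi-periodic solution whose orbit (x(t), x'(t)) stays in U. -/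

import Mathlib

open MeasureTheory Filter

/-!
Write `k = g'(c₀)` and factor the linearization at `c₀` of the equation divided by `ε` as
`∂² + ε⁻¹ ∂ + k = (∂ + a)(∂ + b)`, where `a ≈ 1/ε` and `b ≈ k ε`. Along the linear flow on the torus
the inverses of the two factors are resolvents `(a + ω·∂)⁻¹`, `(b + ω·∂)⁻¹` of norms `1/a`, `1/b` on
bounded functions, so with the Lipschitz constant of the nonlinear remainder below `k = a b` the
response `X` is the fixed point of a contraction; no small divisors appear. The forcing `f - f₀` is
not small compared with `k`, but `b (b + ω·∂)⁻¹ (f - f₀)` is an Abel mean of a zero-average function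
and tends to `0` uniformly as `b → 0` by nonresonance. Hence `X` is small. It is analytic because
`η ↦ X(· + η)` is the fixed point of an analytic family of contractions on bounded functions.

For attraction, the difference `z` of two solutions satisfies the same factored equation up to a
small Lipschitz error, and `(z' + a z)² + (z' + b z)²` is a Lyapunov function. A multiperiodic
function returns along the flow arbitrarily close to each of its values, so two quasi-periodic
solutions that approach each other coincide. A quasi-periodic function satisfying the equation only
with total derivatives need not be `C²`, and is controlled in a smaller neighbourhood `U'` of
`(c₀, 0)`: if `f(ωt)` takes a value other than `g(c₀)`, the velocity is pushed out of `U'`, and if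
`f(ωt)` is identically `g(c₀)`, recurrence and a maximum principle force the constant `c₀`.
-/

open scoped BoundedContinuousFunction Topology

/-- Functions on `ℝ^ι` that are `2π`-periodic in each coordinate. -/
def MultiPeriodic {ι α : Type*} [DecidableEq ι] (f : (ι → ℝ) → α) : Prop :=
  ∀ (ψ : ι → ℝ) (i : ι), f (ψ + Pi.single i (2 * Real.pi)) = f ψ

/-- The quotient map from `ℝ^ι` onto the torus `(ℝ/ℤ)^ι`, rescaled so that its fibres are
the cosets of the lattice `(2πℤ)^ι`. -/
noncomputable def torusProj (ι : Type*) : C(ι → ℝ, UnitAddTorus ι) where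
  toFun ψ i := (ψ i / (2 * Real.pi) : ℝ)
  continuous_toFun := continuous_pi fun i =>
    (AddCircle.continuous_mk' 1).comp ((continuous_apply i).div_const _)

section Torus

variable {ι : Type*}

theorem torusProj_add (ψ η : ι → ℝ) : torusProj ι (ψ + η) = torusProj ι ψ + torusProj ι η := by
  ext i
  simp only [torusProj, ContinuousMap.coe_mk, Pi.add_apply, add_div, AddCircle.coe_add]

theorem torusProj_nsmul (n : ℕ) (ψ : ι → ℝ) : torusProj ι ((n : ℝ) • ψ) = n • torusProj ι ψ := by
  ext i
  simp only [torusProj, ContinuousMap.coe_mk, Pi.smul_apply, smul_eq_mul, mul_div_assoc,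
    ← AddCircle.coe_nsmul, nsmul_eq_mul]

theorem isOpenQuotientMap_torusProj [Finite ι] : IsOpenQuotientMap (torusProj ι) := by
  have hscale : IsOpenQuotientMap fun x : ℝ => ((x / (2 * Real.pi) : ℝ) : UnitAddCircle) :=
    QuotientAddGroup.isOpenQuotientMap_mk.comp
      (Homeomorph.mulRight₀ (2 * Real.pi)⁻¹ (inv_ne_zero Real.two_pi_pos.ne')).isOpenQuotientMap
  exact IsOpenQuotientMap.piMap fun _ => hscale

theorem exists_lattice_of_torusProj_eq {ψ η : ι → ℝ} (h : torusProj ι ψ = torusProj ι η) :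
    ∃ n : ι → ℤ, η + (fun i => n i • (2 * Real.pi)) = ψ := by
  have hcoord : ∀ i, ∃ n : ℤ, n • (1 : ℝ) = ψ i / (2 * Real.pi) - η i / (2 * Real.pi) := fun i => by
    rw [← AddCircle.coe_eq_zero_iff, AddCircle.coe_sub, sub_eq_zero]
    exact congrFun h i
  choose n hn using hcoord
  refine ⟨n, funext fun i => ?_⟩
  have := hn i
  simp only [zsmul_eq_mul, mul_one, Pi.add_apply] at this ⊢
  rw [this]
  field_simp
  ring

theorem MultiPeriodic.add_lattice [Finite ι] [DecidableEq ι] {α : Type*} {f : (ι → ℝ) → α}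
    (hf : MultiPeriodic f) (n : ι → ℤ) (ψ : ι → ℝ) :
    f (ψ + fun i => n i • (2 * Real.pi)) = f ψ := by
  cases nonempty_fintype ι
  have hsum : Function.Periodic f (∑ i, Pi.single i (n i • (2 * Real.pi))) :=
    Finset.sum_induction _ (Function.Periodic f) (fun _ _ => Function.Periodic.add_period)
      (fun ψ => by rw [add_zero]) fun i _ => by
        rw [Pi.single_zsmul]
        exact Function.Periodic.zsmul (fun ψ => hf ψ i) (n i)
  rw [Finset.univ_sum_single] at hsum
  exact hsum ψ

theorem MultiPeriodic.exists_eq_comp_torusProj [Finite ι] [DecidableEq ι] {α : Type*}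
    [TopologicalSpace α] {f : (ι → ℝ) → α} (hf : MultiPeriodic f) (hc : Continuous f) :
    ∃ G : C(UnitAddTorus ι, α), ∀ ψ, f ψ = G (torusProj ι ψ) := by
  have hfactor : Function.FactorsThrough f (torusProj ι) := fun ψ η h => by
    obtain ⟨n, rfl⟩ := exists_lattice_of_torusProj_eq h
    exact hf.add_lattice n η
  have hquot := (isOpenQuotientMap_torusProj (ι := ι)).isQuotientMap
  exact ⟨hquot.lift ⟨f, hc⟩ hfactor,
    fun ψ => (DFunLike.congr_fun (hquot.lift_comp ⟨f, hc⟩ hfactor) ψ).symm⟩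

theorem MultiPeriodic.exists_norm_le [Finite ι] [DecidableEq ι] {E : Type*}
    [SeminormedAddCommGroup E] {f : (ι → ℝ) → E} (hf : MultiPeriodic f) (hc : Continuous f) :
    ∃ C, ∀ ψ, ‖f ψ‖ ≤ C := by
  obtain ⟨G, hG⟩ := hf.exists_eq_comp_torusProj hc
  exact ⟨‖G‖, fun ψ => hG ψ ▸ G.norm_coe_le_norm _⟩

theorem MultiPeriodic.mapClusterPt_smul_atTop [Finite ι] [DecidableEq ι] {α : Type*}
    [TopologicalSpace α] {f : (ι → ℝ) → α} (hf : MultiPeriodic f) (hc : Continuous f)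
    (ω : ι → ℝ) (p : ℝ) : MapClusterPt (f (p • ω)) atTop fun t : ℝ => f (t • ω) := by
  obtain ⟨G, hG⟩ := hf.exists_eq_comp_torusProj hc
  have hreturn : MapClusterPt 0 atTop fun n : ℕ => n • torusProj ι ω :=
    mapClusterPt_zero_atTop_nsmul _
  have hshift : ContinuousAt (fun x => G (torusProj ι (p • ω) + x)) 0 := by fun_prop
  have hnat := hreturn.continuousAt_comp hshift
  rw [add_zero, ← hG] at hnat
  refine MapClusterPt.of_comp (φ := fun n : ℕ => p + (n : ℝ))
    (tendsto_atTop_add_const_left _ _ tendsto_natCast_atTop_atTop) ?_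
  convert hnat using 1
  ext n
  simp only [Function.comp_apply, hG, add_smul, torusProj_add, torusProj_nsmul]

end Torus

theorem norm_exp_smul_apply_le {α E : Type*} [TopologicalSpace α] [NormedAddCommGroup E]
    [NormedSpace ℝ E] (F : α →ᵇ E) (s : ℝ) (x : α) :
    ‖Real.exp s • F x‖ ≤ Real.exp s * ‖F‖ := by
  rw [norm_smul, Real.norm_of_nonneg (Real.exp_pos _).le]
  gcongr
  exact F.norm_coe_le_norm x

section FlowResolvent

variable {V E : Type*} [NormedAddCommGroup V] [NormedSpace ℝ V] [NormedAddCommGroup E]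
  [NormedSpace ℝ E]

/-- The resolvent `(a + ω · ∂)⁻¹` of the linear flow `ψ ↦ ψ + t • ω`, that is, the Laplace
transform of `F` along the backward flow line through `ψ`. -/
noncomputable def flowResolvent (ω : V) (a : ℝ) (F : V → E) (ψ : V) : E :=
  ∫ τ in Set.Ioi (0 : ℝ), Real.exp (-a * τ) • F (ψ - τ • ω)

variable {a : ℝ}

theorem integral_exp_neg_mul_Ioi_zero (ha : 0 < a) :
    ∫ τ in Set.Ioi (0 : ℝ), Real.exp (-a * τ) = a⁻¹ := by
  simpa using integral_exp_mul_Ioi (neg_neg_of_pos ha) 0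

theorem integrableOn_exp_smul_flow (ω : V) (ha : 0 < a) (F : V →ᵇ E) (ψ : V) :
    IntegrableOn (fun τ : ℝ => Real.exp (-a * τ) • F (ψ - τ • ω)) (Set.Ioi 0) :=
  Integrable.mono' ((integrableOn_exp_mul_Ioi (neg_neg_of_pos ha) 0).mul_const ‖F‖)
    (Continuous.aestronglyMeasurable (by fun_prop))
    (ae_of_all _ fun _ => norm_exp_smul_apply_le F _ _)

theorem norm_flowResolvent_le (ω : V) (ha : 0 < a) (F : V →ᵇ E) (ψ : V) :
    ‖flowResolvent ω a F ψ‖ ≤ a⁻¹ * ‖F‖ := by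
  rw [← integral_exp_neg_mul_Ioi_zero ha, ← integral_mul_const]
  exact norm_integral_le_of_norm_le
    ((integrableOn_exp_mul_Ioi (neg_neg_of_pos ha) 0).mul_const ‖F‖)
    (ae_of_all _ fun _ => norm_exp_smul_apply_le F _ _)

theorem continuous_flowResolvent (ω : V) (ha : 0 < a) (F : V →ᵇ E) :
    Continuous (flowResolvent ω a F) :=
  continuous_of_dominated (bound := fun τ => Real.exp (-a * τ) * ‖F‖)
    (fun _ => Continuous.aestronglyMeasurable (by fun_prop))
    (fun _ => ae_of_all _ fun _ => norm_exp_smul_apply_le F _ _)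
    ((integrableOn_exp_mul_Ioi (neg_neg_of_pos ha) 0).mul_const ‖F‖)
    (ae_of_all _ fun _ => by fun_prop)

theorem flowResolvent_add (ω : V) (ha : 0 < a) (F G : V →ᵇ E) (ψ : V) :
    flowResolvent ω a (F + G : V →ᵇ E) ψ = flowResolvent ω a F ψ + flowResolvent ω a G ψ := by
  simp only [flowResolvent, BoundedContinuousFunction.coe_add, Pi.add_apply, smul_add]
  exact integral_add (integrableOn_exp_smul_flow ω ha F ψ) (integrableOn_exp_smul_flow ω ha G ψ)

theorem flowResolvent_smul (ω : V) (a c : ℝ) (F : V → E) (ψ : V) :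
    flowResolvent ω a (c • F) ψ = c • flowResolvent ω a F ψ := by
  simp only [flowResolvent, Pi.smul_apply, smul_comm _ c, integral_smul]

theorem flowResolvent_comp_clm [CompleteSpace E] {E' : Type*} [NormedAddCommGroup E']
    [NormedSpace ℝ E'] [CompleteSpace E'] (ω : V) (ha : 0 < a) (F : V →ᵇ E) (L : E →L[ℝ] E')
    (ψ : V) :
    flowResolvent ω a (fun η => L (F η)) ψ = L (flowResolvent ω a F ψ) := by
  rw [flowResolvent, flowResolvent, ← L.integral_comp_comm (integrableOn_exp_smul_flow ω ha F ψ)]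
  simp only [map_smul]

theorem flowResolvent_add_const (ω : V) (a : ℝ) (F : V → E) (η ψ : V) :
    flowResolvent ω a (fun χ => F (χ + η)) ψ = flowResolvent ω a F (ψ + η) := by
  simp only [flowResolvent, sub_add_eq_add_sub]

/-- The flow resolvent as a bounded operator on bounded continuous functions. -/
noncomputable def flowResolventCLM (ω : V) (ha : 0 < a) : (V →ᵇ E) →L[ℝ] (V →ᵇ E) :=
  LinearMap.mkContinuous
    { toFun := fun F => .ofNormedAddCommGroup (flowResolvent ω a F)
        (continuous_flowResolvent ω ha F) _ (norm_flowResolvent_le ω ha F)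
      map_add' := fun F G => BoundedContinuousFunction.ext (flowResolvent_add ω ha F G)
      map_smul' := fun c F => BoundedContinuousFunction.ext (flowResolvent_smul ω a c F) }
    a⁻¹
    fun F => BoundedContinuousFunction.norm_ofNormedAddCommGroup_le _ (by positivity)
      (norm_flowResolvent_le ω ha F)

@[simp]
theorem flowResolventCLM_apply (ω : V) (ha : 0 < a) (F : V →ᵇ E) (ψ : V) :
    flowResolventCLM ω ha F ψ = flowResolvent ω a F ψ := rfl

theorem norm_flowResolventCLM_le (ω : V) (ha : 0 < a) :
    ‖(flowResolventCLM ω ha : (V →ᵇ E) →L[ℝ] (V →ᵇ E))‖ ≤ a⁻¹ :=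
  LinearMap.mkContinuous_norm_le _ (by positivity) _

theorem flowResolvent_eq_exp_smul_integral_Iic (ω : V) (a : ℝ) (F : V → E) (ψ : V) (s : ℝ) :
    flowResolvent ω a F (ψ + s • ω) =
      Real.exp (-a * s) • ∫ x in Set.Iic s, Real.exp (a * x) • F (ψ + x • ω) := by
  have hshift : ∀ τ : ℝ, Real.exp (-a * τ) • F (ψ + s • ω - τ • ω) =
      Real.exp (-a * s) • Real.exp (a * (s + -τ)) • F (ψ + (s + -τ) • ω) := fun τ => by
    rw [smul_smul, ← Real.exp_add, add_smul, neg_smul, ← add_assoc, sub_eq_add_neg]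
    congr 2
    ring
  simp only [flowResolvent, hshift, integral_smul]
  congr 1
  rw [integral_comp_neg_Ioi (0 : ℝ) fun x => Real.exp (a * (s + x)) • F (ψ + (s + x) • ω), neg_zero,
    ← (measurePreserving_add_left volume s).setIntegral_preimage_emb
      (measurableEmbedding_addLeft s) _ (Set.Iic s)]
  simp only [Set.preimage_const_add_Iic, sub_self]

theorem hasDerivAt_setIntegral_Iic [CompleteSpace E] {G : ℝ → E} (hG : Continuous G)
    (hint : ∀ s, IntegrableOn G (Set.Iic s)) (t : ℝ) :
    HasDerivAt (fun s => ∫ x in Set.Iic s, G x) (G t) t := by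
  have hsplit : (fun s => ∫ x in Set.Iic s, G x) =
      fun s => (∫ x in Set.Iic (0 : ℝ), G x) + ∫ x in (0 : ℝ)..s, G x := funext fun s => by
    rw [← intervalIntegral.integral_Iic_sub_Iic (hint 0) (hint s), add_sub_cancel]
  rw [hsplit]
  exact (intervalIntegral.integral_hasDerivAt_right (hG.intervalIntegrable _ _)
    (hG.stronglyMeasurableAtFilter _ _) hG.continuousAt).const_add _

theorem hasDerivAt_flowResolvent [CompleteSpace E] (ω : V) (ha : 0 < a) (F : V →ᵇ E) (ψ : V)
    (t : ℝ) :
    HasDerivAt (fun s : ℝ => flowResolvent ω a F (ψ + s • ω))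
      (F (ψ + t • ω) - a • flowResolvent ω a F (ψ + t • ω)) t := by
  have hint (s : ℝ) : IntegrableOn (fun x => Real.exp (a * x) • F (ψ + x • ω)) (Set.Iic s) :=
    Integrable.mono' ((integrableOn_exp_mul_Iic ha s).mul_const ‖F‖)
      (Continuous.aestronglyMeasurable (by fun_prop))
      (ae_of_all _ fun _ => norm_exp_smul_apply_le F _ _)
  have hexp : HasDerivAt (fun s : ℝ => Real.exp (-a * s)) (Real.exp (-a * t) * -a) t := by
    simpa using ((hasDerivAt_id t).const_mul (-a)).exp
  simp only [flowResolvent_eq_exp_smul_integral_Iic]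
  refine (hexp.smul (hasDerivAt_setIntegral_Iic (by fun_prop) hint t)).congr_deriv ?_
  rw [smul_smul, ← Real.exp_add, neg_mul, neg_add_cancel, Real.exp_zero, one_smul, mul_neg,
    neg_smul, smul_smul, mul_comm (Real.exp _), sub_eq_add_neg]

end FlowResolvent

section AbelMean

variable {V E : Type*} [NormedAddCommGroup V] [NormedSpace ℝ V] [NormedAddCommGroup E]
  [NormedSpace ℝ E]

/-- The Abel averages `b (b + ω · ∂)⁻¹ F` of `F` along the flow of `ω` converge to the constant
`c` as `b → 0⁺`, uniformly in the starting point. -/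
def HasUniformAbelMean (ω : V) (F : V → E) (c : E) : Prop :=
  TendstoUniformly (fun b ψ => b • flowResolvent ω b F ψ) (fun _ => c) (𝓝[>] (0 : ℝ))

variable {ω : V} {F G : V →ᵇ E} {c c' : E}

theorem HasUniformAbelMean.add (hF : HasUniformAbelMean ω F c) (hG : HasUniformAbelMean ω G c') :
    HasUniformAbelMean ω (F + G : V →ᵇ E) (c + c') := by
  refine (tendstoUniformly_congr ?_).1 (TendstoUniformly.add hF hG)
  filter_upwards [self_mem_nhdsWithin] with b hb
  ext ψ
  simp only [Pi.add_apply, flowResolvent_add ω hb, smul_add]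

theorem HasUniformAbelMean.clm_comp [CompleteSpace E] {E' : Type*} [NormedAddCommGroup E']
    [NormedSpace ℝ E'] [CompleteSpace E'] (hF : HasUniformAbelMean ω F c) (L : E →L[ℝ] E') :
    HasUniformAbelMean ω (fun ψ => L (F ψ)) (L c) := by
  refine (tendstoUniformly_congr ?_).1 (L.uniformContinuous.comp_tendstoUniformly hF)
  filter_upwards [self_mem_nhdsWithin] with b hb
  ext ψ
  rw [flowResolvent_comp_clm ω hb, Function.comp_apply, map_smul]

theorem hasUniformAbelMean_const [CompleteSpace E] (ω : V) (c : E) :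
    HasUniformAbelMean ω (fun _ => c) c := by
  refine Metric.tendstoUniformly_iff.2 fun δ hδ => ?_
  filter_upwards [self_mem_nhdsWithin] with b (hb : 0 < b) ψ
  rwa [flowResolvent, integral_smul_const, integral_exp_neg_mul_Ioi_zero hb,
    smul_inv_smul₀ hb.ne', dist_self]

/-- The operators `b (b + ω · ∂)⁻¹` are contractions, so Abel means pass to uniform limits. -/
theorem hasUniformAbelMean_of_approx
    (h : ∀ δ > 0, ∃ (G : V →ᵇ E) (c' : E), HasUniformAbelMean ω G c' ∧ ‖F - G‖ ≤ δ ∧ ‖c' - c‖ ≤ δ) :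
    HasUniformAbelMean ω F c := by
  refine Metric.tendstoUniformly_iff.2 fun δ hδ => ?_
  obtain ⟨G, c', hG, hFG, hcc'⟩ := h (δ / 3) (by positivity)
  filter_upwards [Metric.tendstoUniformly_iff.1 hG (δ / 3) (by positivity), self_mem_nhdsWithin]
    with b hbG (hb : 0 < b) ψ
  have hsplit : flowResolvent ω b F ψ =
      flowResolvent ω b G ψ + flowResolvent ω b (F - G : V →ᵇ E) ψ := by
    rw [← flowResolvent_add ω hb, add_sub_cancel]
  have hcontract : ‖b • flowResolvent ω b (F - G : V →ᵇ E) ψ‖ ≤ δ / 3 := by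
    rw [norm_smul, Real.norm_of_nonneg hb.le]
    calc b * ‖flowResolvent ω b (F - G : V →ᵇ E) ψ‖ ≤ b * (b⁻¹ * ‖F - G‖) := by
          gcongr
          exact norm_flowResolvent_le ω hb _ ψ
      _ ≤ δ / 3 := by rwa [mul_inv_cancel_left₀ hb.ne']
  calc dist c (b • flowResolvent ω b F ψ)
      = ‖(c' - c) + (b • flowResolvent ω b G ψ - c') +
          b • flowResolvent ω b (F - G : V →ᵇ E) ψ‖ := by
        rw [dist_comm, dist_eq_norm, hsplit, smul_add]
        congr 1
        abel
    _ ≤ ‖c' - c‖ + ‖b • flowResolvent ω b G ψ - c'‖ + ‖b • flowResolvent ω b (F - G : V →ᵇ E) ψ‖ :=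
        norm_add₃_le
    _ < δ := by
        have := hbG ψ
        rw [dist_comm, dist_eq_norm] at this
        linarith

theorem flowResolvent_character {F : V → ℂ} {s b : ℝ} (hb : 0 < b)
    (hF : ∀ (ψ : V) (τ : ℝ), F (ψ - τ • ω) = Complex.exp (-(τ * s) * Complex.I) * F ψ) (ψ : V) :
    flowResolvent ω b F ψ = (b + s * Complex.I)⁻¹ * F ψ := by
  have hexp : ∀ τ : ℝ, Real.exp (-b * τ) • F (ψ - τ • ω) =
      Complex.exp (-(b + s * Complex.I) * τ) * F ψ := fun τ => by
    rw [hF, Complex.real_smul, Complex.ofReal_exp, ← mul_assoc, ← Complex.exp_add]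
    push_cast
    ring_nf
  have hre : (-(b + s * Complex.I)).re < 0 := by simpa using hb
  simp only [flowResolvent, hexp, integral_mul_const, integral_exp_mul_complex_Ioi hre,
    Complex.ofReal_zero, mul_zero, Complex.exp_zero, neg_div_neg_eq, one_div]

theorem hasUniformAbelMean_character {F : V →ᵇ ℂ} {s : ℝ} (hs : s ≠ 0)
    (hF : ∀ (ψ : V) (τ : ℝ), F (ψ - τ • ω) = Complex.exp (-(τ * s) * Complex.I) * F ψ) :
    HasUniformAbelMean ω F 0 := by
  refine Metric.tendstoUniformly_iff.2 fun δ hδ => ?_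
  have hlim : Tendsto (fun b : ℝ => b * (|s|⁻¹ * ‖F‖)) (𝓝[>] 0) (𝓝 0) := by
    simpa using (tendsto_id (x := 𝓝 (0 : ℝ))).mono_left nhdsWithin_le_nhds |>.mul_const _
  filter_upwards [hlim.eventually (gt_mem_nhds hδ), self_mem_nhdsWithin] with b hbδ (hb : 0 < b) ψ
  have hden : |s| ≤ ‖(b + s * Complex.I : ℂ)‖ := by
    simpa using Complex.abs_im_le_norm (b + s * Complex.I)
  have : 0 < |s| := abs_pos.2 hs
  rw [dist_zero_left, norm_smul, Real.norm_of_nonneg hb.le, flowResolvent_character hb hF, norm_mul,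
    norm_inv]
  refine lt_of_le_of_lt ?_ hbδ
  gcongr
  exact F.norm_coe_le_norm ψ

end AbelMean

section TorusMean

attribute [local instance] instMeasureSpaceUnitAddCircle

local instance : Measure.IsAddHaarMeasure (volume : Measure UnitAddCircle) :=
  inferInstanceAs (Measure.IsAddHaarMeasure AddCircle.haarAddCircle)

local instance : IsProbabilityMeasure (volume : Measure UnitAddCircle) :=
  inferInstanceAs (IsProbabilityMeasure AddCircle.haarAddCircle)

variable {ι : Type*} [Fintype ι]

theorem mFourier_torusProj (n : ι → ℤ) (ψ : ι → ℝ) :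
    UnitAddTorus.mFourier n (torusProj ι ψ) = Complex.exp ((∑ i, ψ i * n i : ℝ) * Complex.I) := by
  simp only [UnitAddTorus.mFourier, ContinuousMap.coe_mk, torusProj, fourier_coe_apply,
    ← Complex.exp_sum]
  push_cast
  rw [Finset.sum_mul]
  congr! 2 with i
  have : (Real.pi : ℂ) ≠ 0 := mod_cast Real.pi_ne_zero
  field_simp

theorem mFourier_torusProj_flow (n : ι → ℤ) (ω ψ : ι → ℝ) (τ : ℝ) :
    UnitAddTorus.mFourier n (torusProj ι (ψ - τ • ω)) =
      Complex.exp (-(τ * (∑ i, ω i * n i : ℝ)) * Complex.I) *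
        UnitAddTorus.mFourier n (torusProj ι ψ) := by
  have hsum : ∑ i, (ψ - τ • ω) i * (n i : ℝ) = -(τ * ∑ i, ω i * n i) + ∑ i, ψ i * n i := by
    simp only [Pi.sub_apply, Pi.smul_apply, smul_eq_mul, sub_mul, Finset.sum_sub_distrib, mul_assoc,
      Finset.mul_sum]
    ring
  rw [mFourier_torusProj, mFourier_torusProj, hsum, ← Complex.exp_add]
  push_cast
  ring_nf

theorem integral_mFourier_eq_zero {n : ι → ℤ} (hn : n ≠ 0) :
    ∫ x, UnitAddTorus.mFourier n x = 0 := by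
  simpa [ContinuousMap.inner_toLp, UnitAddTorus.mFourier_zero] using
    UnitAddTorus.orthonormal_mFourier.2 hn.symm

/-- The pullback of a continuous function on the torus to a bounded continuous function on `ℝ^ι`. -/
noncomputable def torusPullback {E : Type*} [NormedAddCommGroup E] (G : C(UnitAddTorus ι, E)) :
    (ι → ℝ) →ᵇ E :=
  (BoundedContinuousFunction.mkOfCompact G).compContinuous (torusProj ι)

theorem hasUniformAbelMean_mFourier {ω : ι → ℝ}
    (hω : ∀ ν : ι → ℤ, ν ≠ 0 → ∑ i, ω i * (ν i : ℝ) ≠ 0) (n : ι → ℤ) :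
    HasUniformAbelMean ω (torusPullback (UnitAddTorus.mFourier n))
      (∫ x, UnitAddTorus.mFourier n x) := by
  rcases eq_or_ne n 0 with rfl | hn
  · rw [UnitAddTorus.mFourier_zero]
    convert hasUniformAbelMean_const ω (1 : ℂ) using 1
    · rfl
    · simp
  · rw [integral_mFourier_eq_zero hn]
    exact hasUniformAbelMean_character (hω n hn) (mFourier_torusProj_flow n ω)

theorem hasUniformAbelMean_of_mem_span {ω : ι → ℝ}
    (hω : ∀ ν : ι → ℤ, ν ≠ 0 → ∑ i, ω i * (ν i : ℝ) ≠ 0) {P : C(UnitAddTorus ι, ℂ)}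
    (hP : P ∈ Submodule.span ℂ (Set.range UnitAddTorus.mFourier)) :
    HasUniformAbelMean ω (torusPullback P) (∫ x, P x) := by
  induction hP using Submodule.span_induction with
  | mem P hP =>
    obtain ⟨n, rfl⟩ := hP
    exact hasUniformAbelMean_mFourier hω n
  | zero =>
    convert hasUniformAbelMean_const ω (0 : ℂ) using 1
    · rfl
    · simp
  | add P Q _ _ hP hQ =>
    have hint (R : C(UnitAddTorus ι, ℂ)) : Integrable R :=
      R.continuous.integrable_of_hasCompactSupport (HasCompactSupport.of_compactSpace _)
    convert hP.add hQ using 1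
    · rfl
    · exact integral_add (hint P) (hint Q)
  | smul c P _ hP =>
    convert hP.clm_comp (ContinuousLinearMap.mul ℝ ℂ c) using 1
    · rfl
    · exact integral_const_mul c P

theorem hasUniformAbelMean_torusPullback {ω : ι → ℝ}
    (hω : ∀ ν : ι → ℤ, ν ≠ 0 → ∑ i, ω i * (ν i : ℝ) ≠ 0) (G : C(UnitAddTorus ι, ℂ)) :
    HasUniformAbelMean ω (torusPullback G) (∫ x, G x) := by
  refine hasUniformAbelMean_of_approx fun δ hδ => ?_
  have hdense :
      G ∈ (Submodule.span ℂ (Set.range (UnitAddTorus.mFourier (d := ι)))).topologicalClosure := by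
    rw [UnitAddTorus.span_mFourier_closure_eq_top]
    trivial
  obtain ⟨P, hP, hGP⟩ := Metric.mem_closure_iff.1 hdense δ hδ
  have hint (R : C(UnitAddTorus ι, ℂ)) : Integrable R :=
    R.continuous.integrable_of_hasCompactSupport (HasCompactSupport.of_compactSpace _)
  have hdist (x : UnitAddTorus ι) : ‖P x - G x‖ ≤ δ := by
    rw [← dist_eq_norm, dist_comm]
    exact (ContinuousMap.dist_apply_le_dist x).trans hGP.le
  refine ⟨torusPullback P, ∫ x, P x, hasUniformAbelMean_of_mem_span hω hP, ?_, ?_⟩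
  · rw [norm_sub_rev]
    refine (BoundedContinuousFunction.norm_le hδ.le).2 fun ψ => ?_
    exact hdist _
  · rw [← integral_sub (hint P) (hint G)]
    simpa using norm_integral_le_of_norm_le_const (μ := volume) (ae_of_all _ hdist)

open scoped Pointwise in
theorem integral_unitAddTorus_eq_setIntegral_Icc {E : Type*} [NormedAddCommGroup E]
    [NormedSpace ℝ E] (G : UnitAddTorus ι → E) :
    ∫ x, G x = ((2 * Real.pi) ^ Fintype.card ι)⁻¹ •
      ∫ ψ in Set.Icc (0 : ι → ℝ) (fun _ => 2 * Real.pi), G (torusProj ι ψ) := by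
  have hbox : (2 * Real.pi) • {x : ι → ℝ | ∀ i, x i ∈ Set.Ioc (0 : ℝ) (0 + 1)} =
      Set.univ.pi fun _ => Set.Ioc (0 : ℝ) (2 * Real.pi) := by
    ext x
    rw [Set.mem_smul_set_iff_inv_smul_mem₀ Real.two_pi_pos.ne']
    simp only [Set.mem_ofPred_eq, Set.mem_univ_pi, Pi.smul_apply, smul_eq_mul, Set.mem_Ioc,
      zero_add, inv_mul_le_iff₀ Real.two_pi_pos, mul_one,
      mul_pos_iff_of_pos_left (inv_pos.2 Real.two_pi_pos)]
  have hproj (x : ι → ℝ) : torusProj ι ((2 * Real.pi) • x) = fun i => (x i : UnitAddCircle) := by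
    ext i
    simp only [torusProj, ContinuousMap.coe_mk, Pi.smul_apply, smul_eq_mul,
      mul_div_cancel_left₀ _ Real.two_pi_pos.ne']
  rw [UnitAddTorus.integral_preimage G fun _ => 0]
  simp only [← hproj]
  rw [Measure.setIntegral_comp_smul_of_pos volume (fun ψ => G (torusProj ι ψ)) _ Real.two_pi_pos,
    hbox, Module.finrank_fintype_fun_eq_card]
  congr 1
  exact setIntegral_congr_set Measure.univ_pi_Ioc_ae_eq_Icc

theorem MultiPeriodic.hasUniformAbelMean [DecidableEq ι] {ω : ι → ℝ}
    (hω : ∀ ν : ι → ℤ, ν ≠ 0 → ∑ i, ω i * (ν i : ℝ) ≠ 0) {f : (ι → ℝ) → ℝ} (hf : MultiPeriodic f)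
    (hc : Continuous f) :
    HasUniformAbelMean ω f (((2 * Real.pi) ^ Fintype.card ι)⁻¹ *
      ∫ ψ in Set.Icc (0 : ι → ℝ) (fun _ => 2 * Real.pi), f ψ) := by
  obtain ⟨G, hG⟩ := hf.exists_eq_comp_torusProj hc
  let Gc : C(UnitAddTorus ι, ℂ) := ⟨fun x => (G x : ℂ), by fun_prop⟩
  have hre := (hasUniformAbelMean_torusPullback hω Gc).clm_comp Complex.reCLM
  have hmean : Complex.reCLM (∫ x, Gc x) = ∫ x, G x := by
    rw [Complex.reCLM_apply, ← Complex.ofReal_re (∫ x, G x)]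
    exact congrArg Complex.re integral_complex_ofReal
  rw [hmean, integral_unitAddTorus_eq_setIntegral_Icc] at hre
  simp only [← hG, smul_eq_mul] at hre
  convert hre using 2 with ψ
  exact hG ψ

end TorusMean

section UniformPowerSeries

variable {E F : Type*} [NormedAddCommGroup E] [NormedSpace ℝ E] [NormedAddCommGroup F]
  [NormedSpace ℝ F]

/-- `f` is the sum of a power series on the ball of radius `r` around `x`, with the Cauchy estimates
`‖pₙ‖ rⁿ ≤ C` for its coefficients. -/
def HasCauchyBoundAt (f : E → F) (r : NNReal) (C : ℝ) (x : E) : Prop :=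
  ∃ p : FormalMultilinearSeries ℝ E F, HasFPowerSeriesOnBall f p x r ∧ ∀ n, ‖p n‖ * (r : ℝ) ^ n ≤ C

variable {f : E → F} {r : NNReal} {C : ℝ} {x : E}

theorem HasCauchyBoundAt.mono {r' : NNReal} {C' : ℝ} (h : HasCauchyBoundAt f r C x) (hr' : 0 < r')
    (hr : r' ≤ r) (hC : C ≤ C') : HasCauchyBoundAt f r' C' x := by
  obtain ⟨p, hp, hbound⟩ := h
  refine ⟨p, hp.mono (mod_cast hr') (mod_cast hr), fun n => ?_⟩
  calc ‖p n‖ * (r' : ℝ) ^ n ≤ ‖p n‖ * (r : ℝ) ^ n := by gcongr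
    _ ≤ C' := (hbound n).trans hC

theorem HasCauchyBoundAt.norm_iteratedFDeriv_le [CompleteSpace F] (h : HasCauchyBoundAt f r C x)
    (n : ℕ) : ‖iteratedFDeriv ℝ n f x‖ ≤ n.factorial * (C / r ^ n) := by
  obtain ⟨p, hp, hbound⟩ := h
  have hr : (0 : ℝ) < r := mod_cast hp.r_pos
  have hpn : ‖p n‖ ≤ C / r ^ n := (le_div_iff₀ (by positivity)).2 (hbound n)
  have hC : 0 ≤ C / r ^ n := (norm_nonneg _).trans hpn
  refine ContinuousMultilinearMap.opNorm_le_bound (by positivity) fun v => ?_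
  rw [hp.iteratedFDeriv_eq_sum_of_completeSpace]
  calc ‖∑ σ : Equiv.Perm (Fin n), p n fun i => v (σ i)‖
      ≤ ∑ _σ : Equiv.Perm (Fin n), C / r ^ n * ∏ i, ‖v i‖ := by
        refine norm_sum_le_of_le _ fun σ _ => ((p n).le_opNorm _).trans ?_
        rw [Equiv.prod_comp σ fun i => ‖v i‖]
        gcongr
    _ = n.factorial * (C / r ^ n) * ∏ i, ‖v i‖ := by
        rw [Finset.sum_const, Finset.card_univ, Fintype.card_perm, Fintype.card_fin, nsmul_eq_mul,
          mul_assoc]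

theorem exists_norm_changeOrigin_mul_pow_le (p : FormalMultilinearSeries ℝ E F)
    (hr : (r : ENNReal) + r < p.radius) :
    ∃ C : ℝ, ∀ y : E, ‖y‖₊ ≤ r → ∀ n, ‖p.changeOrigin y n‖ * (r : ℝ) ^ n ≤ C := by
  have hr' : (r : ENNReal) < p.radius := le_self_add.trans_lt hr
  refine ⟨(∑' s : Σ k l : ℕ, { s : Finset (Fin (k + l)) // s.card = l },
    ‖p (s.1 + s.2.1)‖₊ * r ^ s.2.1 * r ^ s.1 : NNReal), fun y hy n => ?_⟩
  have hy' : (‖y‖₊ : ENNReal) < p.radius := (mod_cast hy : (‖y‖₊ : ENNReal) ≤ r).trans_lt hr'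
  have hcoeff : ‖p.changeOrigin y n‖₊ ≤
      ∑' s : Σ l : ℕ, { s : Finset (Fin (n + l)) // s.card = l }, ‖p (n + s.1)‖₊ * r ^ s.1 :=
    (p.nnnorm_changeOrigin_le n hy').trans <| Summable.tsum_le_tsum (fun s => by gcongr)
      (p.changeOriginSeries_summable_aux₂ hy' n) (p.changeOriginSeries_summable_aux₂ hr' n)
  suffices h : ‖p.changeOrigin y n‖₊ * r ^ n ≤ ∑' s : Σ k l : ℕ,
      { s : Finset (Fin (k + l)) // s.card = l }, ‖p (s.1 + s.2.1)‖₊ * r ^ s.2.1 * r ^ s.1 from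
    mod_cast h
  calc ‖p.changeOrigin y n‖₊ * r ^ n
      ≤ (∑' s : Σ l : ℕ, { s : Finset (Fin (n + l)) // s.card = l },
          ‖p (n + s.1)‖₊ * r ^ s.1) * r ^ n := by gcongr
    _ = ∑' s : Σ l : ℕ, { s : Finset (Fin (n + l)) // s.card = l },
          ‖p (n + s.1)‖₊ * r ^ s.1 * r ^ n := by rw [NNReal.tsum_mul_right]
    _ ≤ _ := NNReal.tsum_comp_le_tsum_of_inj (p.changeOriginSeries_summable_aux₁ hr)
        (i := fun s => ⟨n, s⟩) (fun s t hst => by simpa using hst)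

theorem exists_hasCauchyBoundAt_ball_of_analyticAt [CompleteSpace F] (hf : AnalyticAt ℝ f x) :
    ∃ r : NNReal, 0 < r ∧ ∃ C, ∀ y ∈ Metric.ball x r, HasCauchyBoundAt f r C y := by
  obtain ⟨p, R, hp⟩ := hf
  obtain ⟨ρ, hρ, hρR⟩ := ENNReal.lt_iff_exists_nnreal_btwn.1 hp.r_pos
  have hρ' : 0 < ρ := mod_cast hρ
  set r : NNReal := ρ / 2 with hr
  have hrR : (r : ENNReal) + r < R := by rwa [← ENNReal.coe_add, hr, add_halves]
  obtain ⟨C, hC⟩ := exists_norm_changeOrigin_mul_pow_le p (hrR.trans_le hp.r_le)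
  refine ⟨r, by positivity, C, fun y hy => ?_⟩
  have hyr : ‖y - x‖₊ < r := by
    rw [← NNReal.coe_lt_coe, coe_nnnorm, ← dist_eq_norm]
    exact hy
  have hyr' : (‖y - x‖₊ : ENNReal) < r := mod_cast hyr
  have hball := hp.changeOrigin (y := y - x) (hyr'.trans (le_self_add.trans_lt hrR))
  rw [add_sub_cancel] at hball
  refine ⟨_, hball.mono (mod_cast (by positivity : 0 < r)) ?_, hC _ hyr.le⟩
  exact ENNReal.le_sub_of_add_le_right ENNReal.coe_ne_top
    ((add_le_add_right hyr'.le _).trans hrR.le)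

theorem exists_hasCauchyBoundAt_of_isCompact [CompleteSpace F] {K : Set E} (hK : IsCompact K)
    (hf : ∀ x ∈ K, AnalyticAt ℝ f x) :
    ∃ r : NNReal, 0 < r ∧ ∃ C, ∀ x ∈ K, HasCauchyBoundAt f r C x := by
  refine hK.induction_on
    (p := fun s => ∃ r : NNReal, 0 < r ∧ ∃ C, ∀ x ∈ s, HasCauchyBoundAt f r C x)
    ⟨1, one_pos, 0, by simp⟩ ?mono ?union ?nhds
  case mono =>
    rintro s t hst ⟨r, hr, C, h⟩
    exact ⟨r, hr, C, fun x hx => h x (hst hx)⟩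
  case union =>
    rintro s t ⟨r, hr, C, h⟩ ⟨r', hr', C', h'⟩
    refine ⟨min r r', lt_min hr hr', max C C', ?_⟩
    rintro x (hx | hx)
    · exact (h x hx).mono (lt_min hr hr') (min_le_left _ _) (le_max_left _ _)
    · exact (h' x hx).mono (lt_min hr hr') (min_le_right _ _) (le_max_right _ _)
  case nhds =>
    intro x hx
    obtain ⟨r, hr, C, h⟩ := exists_hasCauchyBoundAt_ball_of_analyticAt (hf x hx)
    exact ⟨_, mem_nhdsWithin_of_mem_nhds (Metric.ball_mem_nhds x (mod_cast hr)), r, hr, C, h⟩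

theorem exists_add_lattice_mem_Icc {ι : Type*} (ψ : ι → ℝ) : ∃ n : ι → ℤ,
    (ψ + fun i => n i • (2 * Real.pi)) ∈ Set.Icc (0 : ι → ℝ) (fun _ => 2 * Real.pi) := by
  have hmem (i : ι) := sub_toIcoDiv_zsmul_mem_Ico Real.two_pi_pos 0 (ψ i)
  refine ⟨fun i => -toIcoDiv Real.two_pi_pos 0 (ψ i), fun i => ?_, fun i => ?_⟩
  · simpa [sub_eq_add_neg] using (hmem i).1
  · simpa [sub_eq_add_neg] using (hmem i).2.le

theorem MultiPeriodic.exists_hasCauchyBoundAt {ι : Type*} [Fintype ι] [DecidableEq ι]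
    [CompleteSpace F] {f : (ι → ℝ) → F} (hper : MultiPeriodic f) (hf : ∀ ψ, AnalyticAt ℝ f ψ) :
    ∃ r : NNReal, 0 < r ∧ ∃ C, ∀ ψ, HasCauchyBoundAt f r C ψ := by
  obtain ⟨r, hr, C, h⟩ := exists_hasCauchyBoundAt_of_isCompact
    (isCompact_Icc (a := (0 : ι → ℝ)) (b := fun _ => 2 * Real.pi)) fun ψ _ => hf ψ
  refine ⟨r, hr, C, fun ψ => ?_⟩
  obtain ⟨n, hn⟩ := exists_add_lattice_mem_Icc ψ
  obtain ⟨p, hp, hbound⟩ := h _ hn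
  refine ⟨p, ?_, hbound⟩
  have hshift := hp.comp_sub (-fun i => n i • (2 * Real.pi))
  simpa only [sub_neg_eq_add, hper.add_lattice n, add_neg_cancel_right] using hshift

end UniformPowerSeries

section BoundedFunctionSeries

variable {α W F : Type*} [TopologicalSpace α] [NormedAddCommGroup W] [NormedSpace ℝ W]
  [NormedAddCommGroup F] [NormedSpace ℝ F]

theorem hasFPowerSeriesOnBall_of_hasSum_apply [CompleteSpace F] {Φ : W → α →ᵇ F}
    {P : FormalMultilinearSeries ℝ W (α →ᵇ F)} {r : ENNReal} (hr : 0 < r) (hrad : r ≤ P.radius)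
    (h : ∀ y ∈ Metric.eball (0 : W) r, ∀ x, HasSum (fun n => P n (fun _ => y) x) (Φ y x)) :
    HasFPowerSeriesOnBall Φ P 0 r := by
  refine ⟨hrad, hr, fun {y} hy => ?_⟩
  have hsum := P.hasSum (Metric.eball_subset_eball hrad hy)
  suffices hval : Φ y = P.sum y by rwa [zero_add, hval]
  ext x
  exact (h y hy x).unique ((BoundedContinuousFunction.evalCLM ℝ x).hasSum hsum)

/-- A bounded continuous family of multilinear maps, as a multilinear map with values in bounded
continuous functions. -/
noncomputable def boundedFamilyMultilinear {n : ℕ} (T : α →ᵇ (W [×n]→L[ℝ] F)) :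
    W [×n]→L[ℝ] (α →ᵇ F) :=
  MultilinearMap.mkContinuous
    { toFun := fun v =>
        (ContinuousMultilinearMap.apply ℝ (fun _ : Fin n => W) F v).compLeftContinuousBounded α T
      map_update_add' := fun v i x y => by
        ext a
        exact (T a).map_update_add v i x y
      map_update_smul' := fun v i c x => by
        ext a
        exact (T a).map_update_smul v i c x }
    ‖T‖ fun v => (BoundedContinuousFunction.norm_le (by positivity)).2 fun a =>
      (T a).le_of_opNorm_le (T.norm_coe_le_norm a) v

theorem norm_boundedFamilyMultilinear_le {n : ℕ} (T : α →ᵇ (W [×n]→L[ℝ] F)) :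
    ‖boundedFamilyMultilinear T‖ ≤ ‖T‖ := by
  exact MultilinearMap.mkContinuous_norm_le _ (norm_nonneg T) _

end BoundedFunctionSeries

section Translate

variable {V F : Type*} [NormedAddCommGroup V] [NormedAddCommGroup F]

/-- The translate `ψ ↦ f (ψ + η)` of a bounded continuous function. -/
noncomputable def translateBCF (η : V) (f : V →ᵇ F) : V →ᵇ F :=
  f.compContinuous ⟨fun ψ => ψ + η, by fun_prop⟩

@[simp]
theorem translateBCF_apply (η ψ : V) (f : V →ᵇ F) : translateBCF η f ψ = f (ψ + η) := rfl

variable [NormedSpace ℝ V] [NormedSpace ℝ F]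

theorem exists_formalMultilinearSeries_taylor [CompleteSpace F] {f : V → F} {r : NNReal} {C : ℝ}
    (hf : ∀ ψ, HasCauchyBoundAt f r C ψ) :
    ∃ P : FormalMultilinearSeries ℝ V (V →ᵇ F), ∀ n, ‖P n‖ * (r : ℝ) ^ n ≤ C ∧
      ∀ y ψ, (n.factorial : ℝ) • P n (fun _ => y) ψ = iteratedFDeriv ℝ n f ψ fun _ => y := by
  have hr : (0 : ℝ) < r := by
    obtain ⟨p, hp, -⟩ := hf 0
    exact mod_cast hp.r_pos
  have hcont : ContDiff ℝ ⊤ f := contDiff_iff_contDiffAt.2 fun ψ =>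
    let ⟨_, hp, _⟩ := hf ψ
    hp.analyticAt.contDiffAt
  have hC : 0 ≤ C := by
    obtain ⟨p, -, hbound⟩ := hf 0
    exact le_trans (by positivity) (hbound 0)
  have hnorm (n : ℕ) (ψ : V) : ‖(n.factorial : ℝ)⁻¹ • iteratedFDeriv ℝ n f ψ‖ ≤ C / r ^ n := by
    rw [norm_smul, norm_inv, RCLike.norm_natCast, inv_mul_le_iff₀ (by positivity)]
    exact (hf ψ).norm_iteratedFDeriv_le n
  let T (n : ℕ) : V →ᵇ (V [×n]→L[ℝ] F) := .ofNormedAddCommGroup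
    (fun ψ => (n.factorial : ℝ)⁻¹ • iteratedFDeriv ℝ n f ψ)
    ((hcont.continuous_iteratedFDeriv (m := n) (mod_cast le_top)).const_smul
      (n.factorial : ℝ)⁻¹) _ (hnorm n)
  refine ⟨fun n => boundedFamilyMultilinear (T n), fun n => ⟨?_, fun y ψ => ?_⟩⟩
  · rw [← le_div_iff₀ (by positivity)]
    exact (norm_boundedFamilyMultilinear_le _).trans
      (BoundedContinuousFunction.norm_ofNormedAddCommGroup_le _ (by positivity) (hnorm n))
  · exact smul_inv_smul₀ (by positivity) (iteratedFDeriv ℝ n f ψ fun _ => y)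

theorem analyticAt_translateBCF [CompleteSpace F] {f : V →ᵇ F} {r : NNReal} {C : ℝ}
    (hf : ∀ ψ, HasCauchyBoundAt f r C ψ) : AnalyticAt ℝ (fun η => translateBCF η f) 0 := by
  obtain ⟨P, hP⟩ := exists_formalMultilinearSeries_taylor hf
  choose p hp _ using hf
  have hcoeff (n : ℕ) (y ψ : V) : P n (fun _ => y) ψ = p ψ n fun _ => y := by
    have hfact := (hp ψ).factorial_smul y n
    rw [← (hP n).2 y ψ, ← Nat.cast_smul_eq_nsmul ℝ] at hfact
    exact (smul_right_injective F (by positivity : (n.factorial : ℝ) ≠ 0) hfact).symm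
  refine ⟨P, r, hasFPowerSeriesOnBall_of_hasSum_apply (hp 0).r_pos
    (P.le_radius_of_bound C fun n => (hP n).1) fun y hy ψ => ?_⟩
  simpa only [hcoeff, translateBCF_apply] using (hp ψ).hasSum hy

end Translate

section LipschitzPerturbation

theorem hasFPowerSeriesOnBall_comp_lipschitz {α : Type*} [TopologicalSpace α] [Nonempty α]
    {q : ℝ → ℝ} {K : NNReal} (hq : LipschitzWith K q) {p : FormalMultilinearSeries ℝ ℝ ℝ}
    {r : ENNReal} (hp : HasFPowerSeriesOnBall q p 0 r) :
    HasFPowerSeriesOnBall (fun x : α →ᵇ ℝ => x.comp q hq)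
      (.ofScalars (α →ᵇ ℝ) p.coeff) 0 r := by
  refine hasFPowerSeriesOnBall_of_hasSum_apply hp.r_pos
    (hp.r_le.trans (FormalMultilinearSeries.radius_le_of_le fun n => ?_)) fun x hx a => ?_
  · rw [FormalMultilinearSeries.ofScalars_norm, FormalMultilinearSeries.norm_apply_eq_norm_coef]
  · have hxa : x a ∈ Metric.eball 0 r := by
      rw [Metric.mem_eball, edist_zero_right] at hx ⊢
      exact (enorm_le_iff_norm_le.2 (x.norm_coe_le_norm a)).trans_lt hx
    simpa [FormalMultilinearSeries.ofScalars_apply_eq, mul_comm] using hp.hasSum hxa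

theorem exists_lipschitzWith_hasFPowerSeriesOnBall {h : ℝ → ℝ} (hh : AnalyticAt ℝ h 0)
    (hderiv : deriv h 0 = 0) {K : NNReal} (hK : 0 < K) :
    ∃ r > (0 : ℝ), ∃ q : ℝ → ℝ, LipschitzWith K q ∧ (∀ u, |u| < r → q u = h u) ∧
      ∃ p : FormalMultilinearSeries ℝ ℝ ℝ, HasFPowerSeriesOnBall q p 0 (ENNReal.ofReal r) := by
  obtain ⟨s, hs, hlip⟩ := hh.hasStrictDerivAt.hasStrictFDerivAt.exists_lipschitzOnWith_of_nnnorm_lt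
    K (by simpa [hderiv] using hK)
  obtain ⟨q, hq, heq⟩ := hlip.extend_real
  obtain ⟨δ, hδ, hball⟩ := Metric.mem_nhds_iff.1 hs
  obtain ⟨p, R, hp⟩ := hh
  obtain ⟨ρ, hρ, hρR⟩ := ENNReal.lt_iff_exists_nnreal_btwn.1 hp.r_pos
  have hr : 0 < min δ ρ := lt_min hδ (mod_cast hρ)
  have hrR : ENNReal.ofReal (min δ ρ) ≤ R :=
    (ENNReal.ofReal_le_ofReal (min_le_right _ _)).trans (by simpa using hρR.le)
  have hqh : Set.EqOn h q (Metric.ball 0 (min δ ρ)) :=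
    heq.mono ((Metric.ball_subset_ball (min_le_left _ _)).trans hball)
  refine ⟨min δ ρ, hr, q, hq, fun u hu => (hqh (by simpa using hu)).symm, p,
    (hp.mono (ENNReal.ofReal_pos.2 hr) hrR).congr ?_⟩
  rwa [Metric.eball_ofReal]

variable {V E : Type*} [NormedAddCommGroup V] [NormedSpace ℝ V] [NormedAddCommGroup E]
  [NormedSpace ℝ E]

theorem exists_continuousLinearEquiv_eq_id_add [CompleteSpace E] {D : E →L[ℝ] E} (hD : ‖D‖ < 1) :
    ∃ e : E ≃L[ℝ] E, (e : E →L[ℝ] E) = .id ℝ E + D := by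
  let u : (E →L[ℝ] E)ˣ := .oneSub (-D) (by rwa [norm_neg])
  have hu : (u : E →L[ℝ] E) = .id ℝ E + D := sub_neg_eq_add _ _
  exact ⟨.unitsEquiv ℝ E u, hu⟩

theorem analyticAt_of_add_lipschitz_comp [CompleteSpace E] {N : E → E} {K : NNReal} (hK : K < 1)
    (hN : LipschitzWith K N) {F X : V → E} {v : V} (hX : ∀ η, X η + N (X η) = F η)
    (hF : AnalyticAt ℝ F v) (hNX : AnalyticAt ℝ N (X v)) : AnalyticAt ℝ X v := by
  have hderiv := hNX.differentiableAt.hasFDerivAt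
  obtain ⟨i, hi⟩ := exists_continuousLinearEquiv_eq_id_add
    ((hderiv.le_of_lipschitz hN).trans_lt (mod_cast hK))
  have hΦ : AnalyticAt ℝ (fun x => x + N x) (X v) := analyticAt_id.add hNX
  have hfderiv : fderiv ℝ (fun x => x + N x) (X v) = i := by
    rw [hi]
    exact ((hasFDerivAt_id _).add hderiv).fderiv
  have hstrict : HasStrictFDerivAt (fun x => x + N x) (i : E →L[ℝ] E) (X v) :=
    hfderiv ▸ hΦ.hasStrictFDerivAt
  let e := hstrict.toOpenPartialHomeomorph _
  have hsymm : AnalyticAt ℝ e.symm (F v) := hX v ▸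
    e.analyticAt_symm' hstrict.mem_toOpenPartialHomeomorph_source hΦ hfderiv
  have hinducing : Topology.IsInducing fun x => x + N x :=
    ((AntilipschitzWith.id.add_lipschitzWith hN (by simpa using hK)).isUniformInducing
      (LipschitzWith.id.add hN).uniformContinuous).isInducing
  have hcont : ContinuousAt X v := hinducing.continuousAt_iff.2 <|
    hF.continuousAt.congr (.of_forall fun η => (hX η).symm)
  refine (hsymm.comp hF).congr ?_
  filter_upwards [hcont.eventually hstrict.eventually_left_inverse] with η hη
  rw [Function.comp_apply, ← hX η]
  exact hη

end LipschitzPerturbation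

section Response

theorem flowResolventCLM_translateBCF {V E : Type*} [NormedAddCommGroup V] [NormedSpace ℝ V]
    [NormedAddCommGroup E] [NormedSpace ℝ E] {a : ℝ} (ω : V) (ha : 0 < a) (η : V) (F : V →ᵇ E) :
    flowResolventCLM ω ha (translateBCF η F) = translateBCF η (flowResolventCLM ω ha F) :=
  BoundedContinuousFunction.ext (flowResolvent_add_const ω a F η)

theorem analyticAt_of_analyticAt_translateBCF {V E : Type*} [NormedAddCommGroup V]
    [NormedSpace ℝ V] [NormedAddCommGroup E] [NormedSpace ℝ E] {F : V →ᵇ E}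
    (hF : AnalyticAt ℝ (fun η => translateBCF η F) 0) (ψ : V) : AnalyticAt ℝ F ψ := by
  have heval : AnalyticAt ℝ (fun η => F (ψ + η)) (ψ - ψ) := by
    rw [sub_self]
    exact ((BoundedContinuousFunction.evalCLM ℝ ψ : (V →ᵇ E) →L[ℝ] E).analyticAt _).comp hF
  have hsub : AnalyticAt ℝ (fun χ : V => χ - ψ) ψ := by fun_prop
  simpa using heval.fun_comp (f := fun χ : V => χ - ψ) hsub

variable {V : Type*} [NormedAddCommGroup V] [NormedSpace ℝ V] {ω : V} {a b : ℝ} {ha : 0 < a}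
  {hb : 0 < b} {q : ℝ → ℝ} {K : NNReal} {hq : LipschitzWith K q} {h X W : V →ᵇ ℝ}

/-- The bounded functions `X` and `W` solve, along the flow of `ω`, the first order system
`X' + a X = W`, `W' + b W = h - q(X)`, that is `X'' + (a + b) X' + a b X = h - q(X)`; the equations
are written in resolvent form, which does not presuppose that `X` is differentiable. -/
structure IsResponse (ω : V) (ha : 0 < a) (hb : 0 < b) (hq : LipschitzWith K q)
    (h X W : V →ᵇ ℝ) : Prop where
  left_eq : flowResolventCLM ω ha W = X
  right_eq : flowResolventCLM ω hb (h - X.comp q hq) = W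

theorem lipschitzWith_flowResolventCLM_comp (ω : V) (ha : 0 < a) (hb : 0 < b)
    (hq : LipschitzWith K q) : LipschitzWith ((a * b)⁻¹.toNNReal * K) fun X : V →ᵇ ℝ =>
      flowResolventCLM ω ha (flowResolventCLM ω hb (X.comp q hq)) := by
  have hnorm : ‖(flowResolventCLM (E := ℝ) ω ha).comp (flowResolventCLM ω hb)‖ ≤
      ((a * b)⁻¹.toNNReal : ℝ) := by
    rw [Real.coe_toNNReal _ (by positivity), mul_inv]
    refine (ContinuousLinearMap.opNorm_comp_le _ _).trans ?_
    gcongr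
    exacts [norm_flowResolventCLM_le ω ha, norm_flowResolventCLM_le ω hb]
  exact (ContinuousLinearMap.lipschitzWith_of_opNorm_le hnorm).comp
    (BoundedContinuousFunction.lipschitz_comp hq)

theorem toNNReal_inv_mul_lt_one (hab : 0 < a * b) (hK : K < a * b) :
    (a * b)⁻¹.toNNReal * K < 1 := by
  rw [← NNReal.coe_lt_coe, NNReal.coe_mul, Real.coe_toNNReal _ (by positivity), NNReal.coe_one,
    inv_mul_lt_one₀ hab]
  exact hK

theorem contractingWith_response (ω : V) (ha : 0 < a) (hb : 0 < b) (hq : LipschitzWith K q)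
    (hK : K < a * b) (h : V →ᵇ ℝ) : ContractingWith ((a * b)⁻¹.toNNReal * K) fun X =>
      flowResolventCLM ω ha (flowResolventCLM ω hb (h - X.comp q hq)) := by
  refine ⟨toNNReal_inv_mul_lt_one (mul_pos ha hb) hK, ?_⟩
  simp only [map_sub]
  simpa using (LipschitzWith.const _).sub (lipschitzWith_flowResolventCLM_comp ω ha hb hq)

theorem exists_isResponse (ω : V) (ha : 0 < a) (hb : 0 < b) (hq : LipschitzWith K q)
    (hK : K < a * b) (h : V →ᵇ ℝ) : ∃ X W, IsResponse ω ha hb hq h X W :=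
  ⟨_, _, (contractingWith_response ω ha hb hq hK h).fixedPoint_isFixedPt, rfl⟩

namespace IsResponse

theorem isFixedPt (hX : IsResponse ω ha hb hq h X W) : Function.IsFixedPt
    (fun X => flowResolventCLM ω ha (flowResolventCLM ω hb (h - X.comp q hq))) X := by
  rw [Function.IsFixedPt, hX.right_eq, hX.left_eq]

theorem unique {X' W' : V →ᵇ ℝ} (hK : K < a * b) (hX : IsResponse ω ha hb hq h X W)
    (hX' : IsResponse ω ha hb hq h X' W') : X = X' :=
  (contractingWith_response ω ha hb hq hK h).fixedPoint_unique' hX.isFixedPt hX'.isFixedPt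

theorem translate (hX : IsResponse ω ha hb hq h X W) (η : V) :
    IsResponse ω ha hb hq (translateBCF η h) (translateBCF η X) (translateBCF η W) where
  left_eq := by rw [flowResolventCLM_translateBCF, hX.left_eq]
  right_eq := by
    rw [← hX.right_eq, ← flowResolventCLM_translateBCF]
    rfl

theorem translateBCF_eq (hK : K < a * b) (hX : IsResponse ω ha hb hq h X W) {η : V}
    (hη : translateBCF η h = h) : translateBCF η X = X :=
  (hη ▸ hX.translate η).unique hK hX

theorem analyticAt (hK : K < a * b) (hX : IsResponse ω ha hb hq h X W)
    (hh : AnalyticAt ℝ (fun η => translateBCF η h) 0) {p : FormalMultilinearSeries ℝ ℝ ℝ}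
    {r : ℝ} (hp : HasFPowerSeriesOnBall q p 0 (ENNReal.ofReal r)) (hXr : ‖X‖ < r) (ψ : V) :
    AnalyticAt ℝ X ψ := by
  let T : (V →ᵇ ℝ) →L[ℝ] (V →ᵇ ℝ) := (flowResolventCLM ω ha).comp (flowResolventCLM ω hb)
  refine analyticAt_of_analyticAt_translateBCF ?_ ψ
  refine analyticAt_of_add_lipschitz_comp (toNNReal_inv_mul_lt_one (mul_pos ha hb) hK)
    (lipschitzWith_flowResolventCLM_comp ω ha hb hq) (F := fun η => T (translateBCF η h))
    (fun η => ?equation) ((T.analyticAt _).comp hh) ?_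
  case equation =>
    have hfix := (hX.translate η).isFixedPt
    simp only [Function.IsFixedPt, map_sub] at hfix
    exact eq_sub_iff_add_eq.1 hfix.symm
  · have hX0 : translateBCF 0 X = X := by
      ext χ
      rw [translateBCF_apply, add_zero]
    have hmem : X ∈ Metric.eball 0 (ENNReal.ofReal r) := by
      rwa [Metric.eball_ofReal, mem_ball_zero_iff]
    rw [hX0]
    exact (T.analyticAt _).comp
      ((hasFPowerSeriesOnBall_comp_lipschitz hq hp).analyticAt_of_mem hmem)

theorem norm_right_le (hX : IsResponse ω ha hb hq h X W) (hq0 : q 0 = 0) :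
    b * ‖W‖ ≤ b * ‖flowResolventCLM ω hb h‖ + K * ‖X‖ := by
  have hcomp : ‖X.comp q hq‖ ≤ K * ‖X‖ := by
    refine (BoundedContinuousFunction.norm_le (by positivity)).2 fun ψ => ?_
    calc ‖q (X ψ)‖ ≤ K * ‖X ψ‖ := by simpa [hq0] using hq.norm_sub_le (X ψ) 0
      _ ≤ K * ‖X‖ := by gcongr; exact X.norm_coe_le_norm ψ
  have hres : b * ‖flowResolventCLM ω hb (X.comp q hq)‖ ≤ K * ‖X‖ := by
    refine le_trans ?_ hcomp
    rw [← le_inv_mul_iff₀ hb]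
    exact ContinuousLinearMap.le_of_opNorm_le _ (norm_flowResolventCLM_le ω hb) _
  have hW : ‖W‖ ≤ ‖flowResolventCLM ω hb h‖ + ‖flowResolventCLM ω hb (X.comp q hq)‖ := by
    rw [← hX.right_eq, map_sub]
    exact norm_sub_le _ _
  nlinarith

theorem norm_left_le (hX : IsResponse ω ha hb hq h X W) : a * ‖X‖ ≤ ‖W‖ := by
  rw [← le_inv_mul_iff₀ ha, ← hX.left_eq]
  exact ContinuousLinearMap.le_of_opNorm_le _ (norm_flowResolventCLM_le ω ha) _

theorem norm_le_two_mul (hX : IsResponse ω ha hb hq h X W) (hq0 : q 0 = 0) (hK : 4 * K ≤ a * b)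
    {σ : ℝ} (hσ : ‖flowResolventCLM ω hb h‖ ≤ a * σ) : ‖X‖ ≤ 2 * σ := by
  have hab := mul_pos ha hb
  have hleft := mul_le_mul_of_nonneg_left hX.norm_left_le hb.le
  have hright := hX.norm_right_le hq0
  have hforce := mul_le_mul_of_nonneg_left hσ hb.le
  have hnonlin := mul_le_mul_of_nonneg_right hK (norm_nonneg X)
  refine le_of_mul_le_mul_left ?_ hab
  nlinarith [mul_nonneg hab.le (norm_nonneg X)]

theorem abs_velocity_le (hX : IsResponse ω ha hb hq h X W) (hq0 : q 0 = 0) (hK : 4 * K ≤ a * b)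
    {σ : ℝ} (hσ : ‖flowResolventCLM ω hb h‖ ≤ a * σ) (ψ : V) :
    |W ψ - a * X ψ| ≤ 4 * (a * σ) := by
  have hXσ := hX.norm_le_two_mul hq0 hK hσ
  have hWσ : ‖W‖ ≤ 2 * (a * σ) := by
    refine le_of_mul_le_mul_left ?_ hb
    have hright := hX.norm_right_le hq0
    have hforce := mul_le_mul_of_nonneg_left hσ hb.le
    have hnonlin := mul_le_mul_of_nonneg_right hK (norm_nonneg X)
    have hab := mul_le_mul_of_nonneg_left hXσ (mul_pos ha hb).le
    have hσ0 : 0 ≤ b * (a * σ) := mul_nonneg hb.le ((norm_nonneg _).trans hσ)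
    linarith
  calc |W ψ - a * X ψ| ≤ |W ψ| + |a * X ψ| := abs_sub _ _
    _ ≤ 2 * (a * σ) + a * (2 * σ) := by
        rw [abs_mul, abs_of_pos ha]
        gcongr
        exacts [(W.norm_coe_le_norm ψ).trans hWσ, (X.norm_coe_le_norm ψ).trans hXσ]
    _ = 4 * (a * σ) := by ring

theorem hasDerivAt_left (hX : IsResponse ω ha hb hq h X W) (t : ℝ) :
    HasDerivAt (fun s : ℝ => X (s • ω)) (W (t • ω) - a * X (t • ω)) t := by
  simpa [← hX.left_eq] using hasDerivAt_flowResolvent ω ha W 0 t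

theorem hasDerivAt_right (hX : IsResponse ω ha hb hq h X W) (t : ℝ) :
    HasDerivAt (fun s : ℝ => W (s • ω)) (h (t • ω) - q (X (t • ω)) - b * W (t • ω)) t := by
  have hderiv := hasDerivAt_flowResolvent ω hb (h - X.comp q hq) 0 t
  simp only [← flowResolventCLM_apply ω hb, hX.right_eq, zero_add] at hderiv
  exact hderiv

end IsResponse
end Response

section Attraction

theorem le_of_hasDerivAt_le_neg_mul {V V' : ℝ → ℝ} {c M : ℝ} (hV : ∀ t, HasDerivAt V (V' t) t)
    (hc : 0 < c) (hM : 0 < M) (hdecay : ∀ t, V t ≤ M → V' t ≤ -c * V t) (h0 : V 0 ≤ M) {t : ℝ}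
    (ht : 0 ≤ t) : V t ≤ M := by
  refine image_le_of_deriv_right_lt_deriv_boundary (B := fun _ => M) (B' := fun _ => 0)
    (HasDerivAt.continuousOn fun s _ => hV s) (fun s _ => (hV s).hasDerivWithinAt) h0
    (fun s => hasDerivAt_const s M) (fun s _ hs => ?_) ⟨ht, le_rfl⟩
  have hVs := hdecay s hs.le
  have hcM : 0 < c * V s := by rw [hs]; positivity
  linarith

theorem le_mul_exp_of_hasDerivAt_le_neg_mul {V V' : ℝ → ℝ} {c M : ℝ}
    (hV : ∀ t, HasDerivAt V (V' t) t) (hc : 0 < c) (hM : 0 < M)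
    (hdecay : ∀ t, V t ≤ M → V' t ≤ -c * V t) (h0 : V 0 ≤ M) {t : ℝ} (ht : 0 ≤ t) :
    V t ≤ V 0 * Real.exp (-c * t) := by
  have hgronwall := le_gronwallBound_of_liminf_deriv_right_le (f := V) (f' := V') (a := 0)
    (b := t) (δ := V 0) (K := -c) (ε := 0) (HasDerivAt.continuousOn fun s _ => hV s)
    (fun s _ r hr => (hV s).hasDerivWithinAt.liminf_right_slope_le hr) le_rfl
    (fun s hs => ?_) t ⟨ht, le_rfl⟩
  · rwa [gronwallBound_ε0, sub_zero] at hgronwall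
  · rw [add_zero]
    exact hdecay s (le_of_hasDerivAt_le_neg_mul hV hc hM hdecay h0 hs.1)

theorem tendsto_zero_of_hasDerivAt_le_neg_mul {V V' : ℝ → ℝ} {c M : ℝ}
    (hV : ∀ t, HasDerivAt V (V' t) t) (hc : 0 < c) (hM : 0 < M) (hnonneg : ∀ t, 0 ≤ V t)
    (hdecay : ∀ t, V t ≤ M → V' t ≤ -c * V t) (h0 : V 0 ≤ M) : Tendsto V atTop (𝓝 0) := by
  have hexp : Tendsto (fun t => V 0 * Real.exp (-c * t)) atTop (𝓝 0) := by
    have hlin : Tendsto (fun t : ℝ => -c * t) atTop atBot :=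
      tendsto_id.const_mul_atTop_of_neg (neg_neg_of_pos hc)
    simpa using (Real.tendsto_exp_atBot.comp hlin).const_mul (V 0)
  refine tendsto_of_tendsto_of_tendsto_of_le_of_le' tendsto_const_nhds hexp (.of_forall hnonneg) ?_
  filter_upwards [eventually_ge_atTop 0] with t ht
  exact le_mul_exp_of_hasDerivAt_le_neg_mul hV hc hM hdecay h0 ht

theorem tendsto_zero_of_sq_add_sq {α : Type*} {l : Filter α} {S F : α → ℝ}
    (h : Tendsto (fun t => S t ^ 2 + F t ^ 2) l (𝓝 0)) : Tendsto S l (𝓝 0) := by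
  refine squeeze_zero_norm (fun t => Real.abs_le_sqrt ?_) (by simpa using h.sqrt)
  linarith [sq_nonneg (F t)]

theorem lyapunov_deriv_le {a b S F p : ℝ} (hb : 0 ≤ b) (hab : b ≤ a)
    (hp : |p| ≤ b / 3 * |S - F|) :
    2 * S * (p - b * S) + 2 * F * (p - a * F) ≤ -(4 * b / 3) * (S ^ 2 + F ^ 2) := by
  have hcross : (S + F) * p ≤ b / 3 * (S ^ 2 + F ^ 2) :=
    calc (S + F) * p ≤ |S + F| * |p| := (le_abs_self _).trans (abs_mul _ _).le
      _ ≤ |S + F| * (b / 3 * |S - F|) := by gcongr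
      _ = b / 3 * |S ^ 2 - F ^ 2| := by rw [sq_sub_sq, abs_mul]; ring
      _ ≤ b / 3 * (S ^ 2 + F ^ 2) := by
        gcongr
        exact abs_le.2 ⟨by linarith [sq_nonneg S], by linarith [sq_nonneg F]⟩
  have hfast : b * F ^ 2 ≤ a * F ^ 2 := by gcongr
  linarith

theorem tendsto_zero_of_two_modes {S F p : ℝ → ℝ} {a b M : ℝ}
    (hS : ∀ t, HasDerivAt S (p t - b * S t) t) (hF : ∀ t, HasDerivAt F (p t - a * F t) t)
    (hb : 0 < b) (hab : b ≤ a) (hM : 0 < M)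
    (hp : ∀ t, |S t - F t| ≤ M → |p t| ≤ b / 3 * |S t - F t|)
    (h0 : S 0 ^ 2 + F 0 ^ 2 ≤ M ^ 2 / 2) : Tendsto S atTop (𝓝 0) ∧ Tendsto F atTop (𝓝 0) := by
  have hV (t : ℝ) : HasDerivAt (fun t => S t ^ 2 + F t ^ 2)
      (2 * S t * (p t - b * S t) + 2 * F t * (p t - a * F t)) t := by
    refine (((hS t).pow 2).add ((hF t).pow 2)).congr_deriv ?_
    push_cast
    ring
  have hsmall (t : ℝ) (ht : S t ^ 2 + F t ^ 2 ≤ M ^ 2 / 2) : |S t - F t| ≤ M :=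
    abs_le_of_sq_le_sq (by nlinarith [sq_nonneg (S t + F t)]) hM.le
  have hlim := tendsto_zero_of_hasDerivAt_le_neg_mul (c := 4 * b / 3) (M := M ^ 2 / 2) hV
    (by positivity) (by positivity) (fun t => by positivity)
    (fun t ht => lyapunov_deriv_le hb.le hab (hp t (hsmall t ht))) h0
  exact ⟨tendsto_zero_of_sq_add_sq hlim,
    tendsto_zero_of_sq_add_sq (F := S) (by simpa only [add_comm] using hlim)⟩

-- The modes of the linear part are `S = z' + a z` and `F = z' + b z`, with `S - F = (a - b) z`.
theorem tendsto_zero_of_damped {z z' z'' : ℝ → ℝ} {a b ρ : ℝ} (hz : ∀ t, HasDerivAt z (z' t) t)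
    (hz' : ∀ t, HasDerivAt z' (z'' t) t) (hb : 0 < b) (hab : 4 * b ≤ a) (hρ : 0 < ρ)
    (hp : ∀ t, |z t| ≤ ρ → |z'' t + (a + b) * z' t + a * b * z t| ≤ a * b / 4 * |z t|)
    (h0 : |z 0| ≤ ρ / 8) (h0' : |z' 0| ≤ a * ρ / 8) :
    Tendsto z atTop (𝓝 0) ∧ Tendsto z' atTop (𝓝 0) := by
  have ha : 0 < a := by linarith
  have hgap (t : ℝ) : 3 * a / 4 * |z t| ≤ |z' t + a * z t - (z' t + b * z t)| := by
    rw [show z' t + a * z t - (z' t + b * z t) = (a - b) * z t by ring, abs_mul]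
    gcongr
    exact le_trans (by linarith) (le_abs_self _)
  have hmode (m : ℝ) (t : ℝ) : HasDerivAt (fun t => z' t + m * z t) (z'' t + m * z' t) t :=
    (hz' t).add ((hz t).const_mul m)
  have hmodes := tendsto_zero_of_two_modes (a := a) (b := b)
    (S := fun t => z' t + a * z t) (F := fun t => z' t + b * z t)
    (p := fun t => z'' t + (a + b) * z' t + a * b * z t)
    (M := 3 * a / 4 * ρ) (fun t => (hmode a t).congr_deriv (by ring))
    (fun t => (hmode b t).congr_deriv (by ring)) hb (by linarith) (by positivity)
    (fun t ht => ?perturbation) ?initial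
  case perturbation =>
    have hzt : |z t| ≤ ρ := le_of_mul_le_mul_left ((hgap t).trans ht) (by positivity)
    linarith [hp t hzt, mul_le_mul_of_nonneg_left (hgap t) hb.le]
  case initial =>
    have hinit {m : ℝ} (hm : 0 ≤ m) (hma : m ≤ a) : (z' 0 + m * z 0) ^ 2 ≤ (a * ρ / 4) ^ 2 := by
      refine sq_le_sq' ?_ ?_ <;>
        nlinarith [mul_le_mul hma h0 (abs_nonneg _) ha.le, abs_le.1 h0', neg_abs_le (z 0),
          le_abs_self (z 0)]
    nlinarith [hinit ha.le le_rfl, hinit hb.le (by linarith), sq_pos_of_pos (mul_pos ha hρ)]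
  obtain ⟨hSlim, hFlim⟩ := hmodes
  have hzlim : Tendsto z atTop (𝓝 0) := by
    have hdiff := (hSlim.sub hFlim).div_const (a - b)
    rw [sub_zero, zero_div] at hdiff
    refine hdiff.congr fun t => ?_
    rw [div_eq_iff (by linarith)]
    ring
  refine ⟨hzlim, ?_⟩
  simpa using hSlim.sub (hzlim.const_mul a)

end Attraction

section ForcedSolution

/-- `x` solves `ε x'' + x' + ε g(x) = ε F(t)`. Derivatives are total (`deriv` is `0` at points of
non-differentiability), so a solution in this sense need not be of class `C²`. -/
def IsForcedSolution (ε : ℝ) (g F x : ℝ → ℝ) : Prop :=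
  ∀ t, ε * deriv (deriv x) t + deriv x t + ε * g (x t) = ε * F t

variable {ε : ℝ} {g F x y : ℝ → ℝ}

namespace IsForcedSolution

theorem neg (hx : IsForcedSolution ε g F x) :
    IsForcedSolution ε (fun u => -g (-u)) (fun t => -F t) (fun t => -x t) := fun t => by
  simp only [deriv.fun_neg', neg_neg]
  linarith [hx t]

theorem sub_const (hx : IsForcedSolution ε g F x) (c : ℝ) :
    IsForcedSolution ε (fun u => g (c + u) - g c) (fun t => F t - g c) (fun t => x t - c) :=
  fun t => by
  simp only [deriv_sub_const_fun, add_sub_cancel]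
  linarith [hx t]

theorem tendsto_sub_of_lipschitzOnWith {a b c R σ ρ : ℝ} {K : NNReal}
    (hx : IsForcedSolution ε g F x) (hy : IsForcedSolution ε g F y) (hx2 : ContDiff ℝ 2 x)
    (hy2 : ContDiff ℝ 2 y) (hε : 0 < ε) (hεab : ε * (a + b) = 1) (hb : 0 < b) (hab : 4 * b ≤ a)
    (hg : LipschitzOnWith K (fun u => g u - a * b * u) (Metric.ball c R)) (hK : 4 * K ≤ a * b)
    (hρ : 0 < ρ) (hR : σ + ρ < R) (hxσ : ∀ t, |x t - c| ≤ σ) (h0 : |y 0 - x 0| ≤ ρ / 8)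
    (h0' : |deriv y 0 - deriv x 0| ≤ a * ρ / 8) :
    Tendsto (fun t => y t - x t) atTop (𝓝 0) ∧
      Tendsto (fun t => deriv y t - deriv x t) atTop (𝓝 0) := by
  have hderiv {w : ℝ → ℝ} (hw : ContDiff ℝ 2 w) (t : ℝ) : HasDerivAt w (deriv w t) t :=
    (hw.differentiable (by norm_num) t).hasDerivAt
  have hderiv2 {w : ℝ → ℝ} (hw : ContDiff ℝ 2 w) (t : ℝ) :
      HasDerivAt (deriv w) (deriv (deriv w) t) t :=
    ((ContDiff.deriv' hw).differentiable one_ne_zero t).hasDerivAt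
  refine tendsto_zero_of_damped (fun t => (hderiv hy2 t).sub (hderiv hx2 t))
    (fun t => (hderiv2 hy2 t).sub (hderiv2 hx2 t)) hb hab hρ (fun t ht => ?_) h0 h0'
  have hxmem : x t ∈ Metric.ball c R := by
    rw [Metric.mem_ball, Real.dist_eq]
    linarith [hxσ t]
  have hymem : y t ∈ Metric.ball c R := by
    rw [Metric.mem_ball, Real.dist_eq]
    linarith [hxσ t, abs_sub_le (y t) (x t) c]
  have hlip := hg.norm_sub_le hymem hxmem
  have hequation : deriv (deriv y) t - deriv (deriv x) t + (a + b) * (deriv y t - deriv x t) +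
      a * b * (y t - x t) = -(g (y t) - a * b * y t - (g (x t) - a * b * x t)) := by
    refine mul_left_cancel₀ hε.ne' ?_
    linear_combination hy t - hx t + (deriv y t - deriv x t) * hεab
  rw [hequation, abs_neg]
  refine hlip.trans (mul_le_mul_of_nonneg_right ?_ (norm_nonneg _))
  linarith

end IsForcedSolution

theorem MultiPeriodic.eq_of_tendsto_smul {ι α : Type*} [Finite ι] [DecidableEq ι]
    [TopologicalSpace α] [T2Space α] {Z : (ι → ℝ) → α} (hZ : MultiPeriodic Z)
    (hc : Continuous Z) {ω : ι → ℝ} {z : α} (hlim : Tendsto (fun t : ℝ => Z (t • ω)) atTop (𝓝 z))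
    (p : ℝ) : Z (p • ω) = z :=
  eq_of_nhds_neBot (ClusterPt.mono (hZ.mapClusterPt_smul_atTop hc ω p) hlim)

end ForcedSolution

section TotalDerivative

theorem deriv_deriv_eq_zero_of_isLocalMin_of_isLocalMax {φ : ℝ → ℝ} {s : ℝ}
    (hmin : IsLocalMin φ s) (hmax : IsLocalMax φ s) : deriv (deriv φ) s = 0 := by
  have hconst : φ =ᶠ[𝓝 s] fun _ => φ s := by
    filter_upwards [hmin, hmax] with x hle hge using le_antisymm hge hle
  rw [hconst.deriv.deriv_eq]
  simp

theorem differentiableAt_of_eventually_of_continuousAt_deriv {u : ℝ → ℝ} {t : ℝ}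
    (hu : ContinuousAt u t) (hderiv : ContinuousAt (deriv u) t)
    (hdiff : ∀ᶠ s in 𝓝[≠] t, DifferentiableAt ℝ u s) : DifferentiableAt ℝ u t := by
  have hon : DifferentiableOn ℝ u {s | DifferentiableAt ℝ u s} := fun s hs =>
    hs.differentiableWithinAt
  have hright : HasDerivWithinAt u (deriv u t) (Set.Ici t) t :=
    hasDerivWithinAt_Ici_of_tendsto_deriv hon hu.continuousWithinAt
      (nhdsGT_le_nhdsNE t hdiff) (hderiv.mono_left nhdsWithin_le_nhds)
  have hleft : HasDerivWithinAt u (deriv u t) (Set.Iic t) t :=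
    hasDerivWithinAt_Iic_of_tendsto_deriv hon hu.continuousWithinAt
      (nhdsLT_le_nhdsNE t hdiff) (hderiv.mono_left nhdsWithin_le_nhds)
  have hunion := hleft.union hright
  rw [Set.Iic_union_Ici, hasDerivWithinAt_univ] at hunion
  exact hunion.differentiableAt

theorem eventually_differentiableAt_of_deriv_deriv_ne_zero {u : ℝ → ℝ} {t : ℝ}
    (hu : ContinuousAt u t) (h : deriv (deriv u) t ≠ 0) :
    ∀ᶠ s in 𝓝 t, DifferentiableAt ℝ u s := by
  have hdd : DifferentiableAt ℝ (deriv u) t := differentiableAt_of_deriv_ne_zero h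
  have hne : ∀ᶠ s in 𝓝[≠] t, DifferentiableAt ℝ u s := by
    filter_upwards [hdd.hasDerivAt.eventually_ne h (c := 0)] with s hs
    exact differentiableAt_of_deriv_ne_zero hs
  rw [← nhdsNE_sup_pure, eventually_sup, eventually_pure]
  exact ⟨hne, differentiableAt_of_eventually_of_continuousAt_deriv hu hdd.continuousAt hne⟩

theorem hasDerivAt_exp_mul_mul {u : ℝ → ℝ} {u' t : ℝ} (μ : ℝ) (hu : HasDerivAt u u' t) :
    HasDerivAt (fun s => Real.exp (μ * s) * u s) (Real.exp (μ * t) * (μ * u t + u')) t := by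
  have hexp : HasDerivAt (fun s : ℝ => Real.exp (μ * s)) (Real.exp (μ * t) * μ) t := by
    simpa using ((hasDerivAt_id t).const_mul μ).exp
  exact (hexp.mul hu).congr_deriv (by ring)

theorem deriv_deriv_exp_mul_mul {u : ℝ → ℝ} {t : ℝ} (μ : ℝ)
    (hu : ∀ᶠ s in 𝓝 t, DifferentiableAt ℝ u s) (hu' : DifferentiableAt ℝ (deriv u) t) :
    deriv (deriv fun s => Real.exp (μ * s) * u s) t =
      Real.exp (μ * t) * (μ ^ 2 * u t + 2 * μ * deriv u t + deriv (deriv u) t) := by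
  have hfirst : (deriv fun s => Real.exp (μ * s) * u s) =ᶠ[𝓝 t]
      fun s => Real.exp (μ * s) * (μ * u s + deriv u s) := by
    filter_upwards [hu] with s hs using (hasDerivAt_exp_mul_mul μ hs.hasDerivAt).deriv
  have hsecond := hasDerivAt_exp_mul_mul μ
    ((hu.self_of_nhds.hasDerivAt.const_mul μ).add hu'.hasDerivAt)
  rw [hfirst.deriv_eq]
  refine hsecond.deriv.trans ?_
  rw [Pi.add_apply]
  ring

theorem forall_ge_pos_or_forall_le_pos_of_not_isLocalMax {φ : ℝ → ℝ} (hφ : Continuous φ)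
    (hmax : ∀ s, 0 < φ s → ¬IsLocalMax φ s) {t₀ : ℝ} (h0 : 0 < φ t₀) :
    (∀ t ≥ t₀, 0 < φ t) ∨ ∀ t ≤ t₀, 0 < φ t := by
  by_contra! hcon
  obtain ⟨⟨β, hβ, hφβ⟩, α, hα, hφα⟩ := hcon
  obtain ⟨s, hs, hsmax⟩ := isCompact_Icc.exists_isMaxOn (Set.nonempty_Icc.2 (hα.trans hβ))
    hφ.continuousOn
  have hpos : 0 < φ s := h0.trans_le (hsmax ⟨hα, hβ⟩)
  have hnhds : Set.Icc α β ∈ 𝓝 s :=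
    Icc_mem_nhds (lt_of_le_of_ne hs.1 (by rintro rfl; linarith))
      (lt_of_le_of_ne hs.2 (by rintro rfl; linarith))
  exact hmax s hpos (hsmax.isLocalMax hnhds)

theorem exists_isLocalMin_of_lt {u : ℝ → ℝ} (hu : Continuous u) {x y z : ℝ} (hxy : x < y)
    (hyz : y < z) (hx : u y < u x) (hz : u y < u z) : ∃ s > x, IsLocalMin u s := by
  obtain ⟨s, hs, hmin⟩ := isCompact_Icc.exists_isMinOn (Set.nonempty_Icc.2 (hxy.trans hyz).le)
    hu.continuousOn
  have hsy : u s ≤ u y := hmin ⟨hxy.le, hyz.le⟩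
  have hxs : x < s := lt_of_le_of_ne hs.1 (by rintro rfl; linarith)
  have hsz : s < z := lt_of_le_of_ne hs.2 (by rintro rfl; linarith)
  exact ⟨s, hxs, hmin.isLocalMin (Icc_mem_nhds hxs hsz)⟩

theorem exists_gt_isLocalMin_of_mapClusterPt {u : ℝ → ℝ} (hu : Continuous u)
    (hrec : ∀ p, MapClusterPt (u p) atTop u) (t₀ : ℝ) : ∃ s > t₀, IsLocalMin u s := by
  by_cases hconst : ∃ l p, u l < u p
  · obtain ⟨l, p, hlp⟩ := hconst
    obtain ⟨m, hlm, hmp⟩ := exists_between hlp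
    have hlow : ∃ᶠ t in atTop, u t < m := (hrec l).frequently (eventually_lt_nhds hlm)
    have hhigh : ∃ᶠ t in atTop, m < u t := (hrec p).frequently (eventually_gt_nhds hmp)
    obtain ⟨x, hx, hux⟩ := frequently_atTop'.1 hhigh t₀
    obtain ⟨y, hy, huy⟩ := frequently_atTop'.1 hlow x
    obtain ⟨z, hz, huz⟩ := frequently_atTop'.1 hhigh y
    obtain ⟨s, hs, hmin⟩ := exists_isLocalMin_of_lt hu hy hz (huy.trans hux) (huy.trans huz)
    exact ⟨s, hx.trans hs, hmin⟩
  · push Not at hconst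
    exact ⟨t₀ + 1, by linarith, .of_forall fun t => hconst t (t₀ + 1)⟩

end TotalDerivative

namespace IsForcedSolution

variable {ε : ℝ} {g F h u y : ℝ → ℝ}

theorem not_isLocalMin (hy : IsForcedSolution ε g F y) (hε : 0 < ε) {s : ℝ}
    (hc : ContinuousAt y s) (hlt : F s < g (y s)) : ¬IsLocalMin y s := fun hmin => by
  have hzero := hmin.deriv_eq_zero
  have hneg : deriv (deriv y) s < 0 := by
    have hys := hy s
    rw [hzero] at hys
    nlinarith
  exact hneg.ne (deriv_deriv_eq_zero_of_isLocalMin_of_isLocalMax hmin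
    (isLocalMax_of_deriv_deriv_neg hneg hzero hc))

theorem differentiableAt (hy : IsForcedSolution ε g F y) (hε : ε ≠ 0) {s : ℝ}
    (hc : ContinuousAt y s) (hne : g (y s) ≠ F s) : DifferentiableAt ℝ y s := by
  by_contra hndiff
  have hzero := deriv_zero_of_not_differentiableAt hndiff
  refine hndiff (eventually_differentiableAt_of_deriv_deriv_ne_zero hc fun hdd => ?_).self_of_nhds
  have hys := hy s
  rw [hzero, hdd, mul_zero, add_zero, zero_add] at hys
  exact hne (mul_left_cancel₀ hε hys)

-- The weight `exp (t / (2 ε))` removes the first order term: `φ = exp (t / (2 ε)) u` satisfies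
-- `φ'' = exp (t / (2 ε)) (u / (4 ε²) - h(u))`.
theorem not_isLocalMax_exp_mul (hu : IsForcedSolution ε h (fun _ => 0) u) (hε : 0 < ε)
    (hc : Continuous u) {s : ℝ} (hpos : 0 < h (u s)) (hlt : h (u s) < u s / (4 * ε ^ 2)) :
    ¬IsLocalMax (fun t => Real.exp (1 / (2 * ε) * t) * u t) s := fun hmax => by
  set μ : ℝ := 1 / (2 * ε) with hμ
  have hμu : u s / (4 * ε ^ 2) = μ ^ 2 * u s := by rw [hμ]; field_simp; ring
  have hode : deriv (deriv u) s = -(2 * μ) * deriv u s - h (u s) := by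
    have hus := hu s
    rw [hμ]
    field_simp
    linarith
  have hdiff := hu.differentiableAt hε.ne' hc.continuousAt hpos.ne'
  have hcrit : deriv (fun t => Real.exp (μ * t) * u t) s = 0 := hmax.deriv_eq_zero
  have hslope : μ * u s + deriv u s = 0 := by
    rw [(hasDerivAt_exp_mul_mul μ hdiff.hasDerivAt).deriv] at hcrit
    exact (mul_eq_zero.1 hcrit).resolve_left (Real.exp_ne_zero _)
  have hconvex : deriv (deriv u) s ≠ 0 := by
    have : deriv (deriv u) s = 2 * (μ ^ 2 * u s) - h (u s) := by
      rw [hode]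
      linear_combination -(2 * μ) * hslope
    rw [this]
    linarith
  have hsecond : 0 < deriv (deriv fun t => Real.exp (μ * t) * u t) s := by
    rw [deriv_deriv_exp_mul_mul μ
      (eventually_differentiableAt_of_deriv_deriv_ne_zero hc.continuousAt hconvex)
      (differentiableAt_of_deriv_ne_zero hconvex), hode]
    exact mul_pos (Real.exp_pos _) (by linarith)
  exact hsecond.ne' (deriv_deriv_eq_zero_of_isLocalMin_of_isLocalMax
    (isLocalMin_of_deriv_deriv_pos hsecond hcrit (by fun_prop)) hmax)

theorem nonpos_of_mapClusterPt (hu : IsForcedSolution ε h (fun _ => 0) u) (hε : 0 < ε)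
    (hc : Continuous u) (hh : ∀ t, 0 < u t → 0 < h (u t) ∧ h (u t) < u t / (4 * ε ^ 2))
    (htop : ∀ p, MapClusterPt (u p) atTop u)
    (hbot : ∀ p, MapClusterPt (u (-p)) atTop fun t => u (-t)) (t₀ : ℝ) : u t₀ ≤ 0 := by
  by_contra! ht₀
  have hnomin (s : ℝ) (hs : 0 < u s) : ¬IsLocalMin u s :=
    hu.not_isLocalMin hε hc.continuousAt (hh s hs).1
  have hexp (t : ℝ) : 0 < Real.exp (1 / (2 * ε) * t) * u t ↔ 0 < u t :=
    mul_pos_iff_of_pos_left (Real.exp_pos _)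
  have hhalf := forall_ge_pos_or_forall_le_pos_of_not_isLocalMax
    (φ := fun t => Real.exp (1 / (2 * ε) * t) * u t) (by fun_prop)
    (fun s hs => hu.not_isLocalMax_exp_mul hε hc (hh s ((hexp s).1 hs)).1
      (hh s ((hexp s).1 hs)).2) ((hexp t₀).2 ht₀)
  simp only [hexp] at hhalf
  rcases hhalf with hright | hleft
  · obtain ⟨s, hs, hmin⟩ := exists_gt_isLocalMin_of_mapClusterPt hc htop t₀
    exact hnomin s (hright s hs.le) hmin
  · obtain ⟨s, hs, hmin⟩ := exists_gt_isLocalMin_of_mapClusterPt (hc.comp continuous_neg) hbot (-t₀)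
    rw [← neg_neg s] at hmin
    have hreflect := hmin.comp_continuous continuous_neg.continuousAt
    simp only [Function.comp_def, neg_neg] at hreflect
    exact hnomin (-s) (hleft _ (by linarith)) hreflect

theorem eq_zero_of_mapClusterPt (hu : IsForcedSolution ε h (fun _ => 0) u) (hε : 0 < ε)
    (hc : Continuous u) (hh : ∀ t, u t ≠ 0 → h (u t) / u t ∈ Set.Ioo 0 (1 / (4 * ε ^ 2)))
    (htop : ∀ p, MapClusterPt (u p) atTop u)
    (hbot : ∀ p, MapClusterPt (u (-p)) atTop fun t => u (-t)) (t : ℝ) : u t = 0 := by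
  have hratio {w k : ℝ} (hw : 0 < w) (hk : k / w ∈ Set.Ioo 0 (1 / (4 * ε ^ 2))) :
      0 < k ∧ k < w / (4 * ε ^ 2) := by
    refine ⟨(div_pos_iff_of_pos_right hw).1 hk.1, ?_⟩
    simpa [div_eq_inv_mul] using (div_lt_iff₀ hw).1 hk.2
  refine le_antisymm
    (hu.nonpos_of_mapClusterPt hε hc (fun t ht => hratio ht (hh t ht.ne')) htop hbot t) ?_
  have hneg : IsForcedSolution ε (fun w => -h (-w)) (fun _ => 0) (fun t => -u t) := by
    simpa using hu.neg
  refine neg_nonpos.1 (hneg.nonpos_of_mapClusterPt hε hc.neg (fun t ht => hratio ht ?_)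
    (fun p => (htop p).continuousAt_comp continuous_neg.continuousAt)
    (fun p => (hbot p).continuousAt_comp continuous_neg.continuousAt) t)
  simpa only [neg_neg, neg_div_neg_eq] using hh t (neg_pos.1 ht).ne

theorem exists_nhds_forall_exists_notMem_of_lt {c t₀ : ℝ} (hε : 0 < ε) (hF : ContinuousAt F t₀)
    (hg : ContinuousAt g c) (hlt : g c < F t₀) : ∃ U ∈ 𝓝 ((c, 0) : ℝ × ℝ), ∀ y : ℝ → ℝ,
      IsForcedSolution ε g F y → ∃ t, (y t, deriv y t) ∉ U := by
  obtain ⟨m, hgm, hmF⟩ := exists_between hlt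
  obtain ⟨m', hmm', hm'F⟩ := exists_between hmF
  obtain ⟨l, hl, hball⟩ := Metric.eventually_nhds_iff.1 (hF.eventually_const_lt hm'F)
  obtain ⟨δ, hδ, hmδ⟩ : ∃ δ > 0, m + 2 * δ = m' := ⟨(m' - m) / 2, by linarith, by ring⟩
  refine ⟨{p | g p < m} ×ˢ Metric.ball 0 (min (ε * δ) (δ * (l / 2) / 2)),
    prod_mem_nhds (hg.eventually_lt_const hgm) (Metric.ball_mem_nhds 0 (by positivity)),
    fun y hy => ?_⟩
  by_contra! hmem
  have hvel (t : ℝ) : |deriv y t| < ε * δ ∧ |deriv y t| < δ * (l / 2) / 2 := by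
    simpa using (hmem t).2
  have haccel (t : ℝ) (ht : t ∈ Set.Icc t₀ (t₀ + l / 2)) : δ ≤ deriv (deriv y) t := by
    have hFt : m' < F t := hball <| by
      rw [Real.dist_eq, abs_lt]
      constructor <;> linarith [ht.1, ht.2]
    have hgt : g (y t) < m := (hmem t).1
    have hforce : ε * (2 * δ) ≤ ε * (F t - g (y t)) := by gcongr; linarith
    refine le_of_mul_le_mul_left ?_ hε
    linarith [hy t, (abs_lt.1 (hvel t).1).2]
  have hdiff (t : ℝ) (ht : t ∈ Set.Icc t₀ (t₀ + l / 2)) : DifferentiableAt ℝ (deriv y) t :=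
    differentiableAt_of_deriv_ne_zero (hδ.trans_le (haccel t ht)).ne'
  have hgain := (convex_Icc t₀ (t₀ + l / 2)).mul_sub_le_image_sub_of_le_deriv (C := δ)
    (fun t ht => (hdiff t ht).continuousAt.continuousWithinAt)
    (fun t ht => (hdiff t (interior_subset ht)).differentiableWithinAt)
    (fun t ht => haccel t (interior_subset ht)) t₀ ⟨le_rfl, by linarith⟩ (t₀ + l / 2)
    ⟨by linarith, le_rfl⟩ (by linarith)
  rw [add_sub_cancel_left] at hgain
  linarith [(abs_lt.1 (hvel t₀).2).1, (abs_lt.1 (hvel (t₀ + l / 2)).2).2]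

theorem exists_nhds_forall_exists_notMem {c t₀ : ℝ} (hε : 0 < ε) (hF : ContinuousAt F t₀)
    (hg : ContinuousAt g c) (hne : F t₀ ≠ g c) : ∃ U ∈ 𝓝 ((c, 0) : ℝ × ℝ), ∀ y : ℝ → ℝ,
      IsForcedSolution ε g F y → ∃ t, (y t, deriv y t) ∉ U := by
  rcases hne.lt_or_gt with hlt | hgt
  · have hg' : ContinuousAt (fun w => -g (-w)) (-c) :=
      (hg.comp_of_eq continuous_neg.continuousAt (neg_neg c)).neg
    obtain ⟨U, hU, hleave⟩ := exists_nhds_forall_exists_notMem_of_lt hε hF.neg hg'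
      (by simpa using hlt)
    refine ⟨Neg.neg ⁻¹' U, continuous_neg.continuousAt.preimage_mem_nhds (by simpa using hU),
      fun y hy => ?_⟩
    simpa using hleave _ hy.neg
  · exact exists_nhds_forall_exists_notMem_of_lt hε hF hg hgt

theorem exists_nhds_forall_contDiff {c k : ℝ} (hε : 0 < ε) (hF : Continuous F)
    (hg : HasDerivAt g k c) (hk : k ∈ Set.Ioo 0 (1 / (4 * ε ^ 2))) :
    ∃ U ∈ 𝓝 ((c, 0) : ℝ × ℝ), ∀ y : ℝ → ℝ, Continuous y → IsForcedSolution ε g F y →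
      (∀ p, MapClusterPt (y p) atTop y) → (∀ p, MapClusterPt (y (-p)) atTop fun t => y (-t)) →
      (∀ t, (y t, deriv y t) ∈ U) → ContDiff ℝ 2 y := by
  by_cases hforced : ∃ t₀, F t₀ ≠ g c
  · obtain ⟨t₀, ht₀⟩ := hforced
    obtain ⟨U, hU, hleave⟩ :=
      exists_nhds_forall_exists_notMem hε hF.continuousAt hg.continuousAt ht₀
    refine ⟨U, hU, fun y _ hy _ _ hmem => ?_⟩
    obtain ⟨t, ht⟩ := hleave y hy
    exact absurd (hmem t) ht
  · push Not at hforced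
    have hslope : ∀ᶠ u in 𝓝 c, u ≠ c → (g u - g c) / (u - c) ∈ Set.Ioo 0 (1 / (4 * ε ^ 2)) := by
      refine (eventually_nhdsWithin_iff (s := {c}ᶜ)).1 ?_
      filter_upwards [hg.tendsto_slope.eventually (isOpen_Ioo.mem_nhds hk)] with u hu
      rwa [slope_def_field] at hu
    refine ⟨_, prod_mem_nhds hslope univ_mem, fun y hc hy htop hbot hmem => ?_⟩
    have hshift : IsForcedSolution ε (fun u => g (c + u) - g c) (fun _ => 0) fun t => y t - c := by
      simpa [hforced] using hy.sub_const c
    have hsub : Continuous fun u : ℝ => u - c := by fun_prop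
    have hzero := hshift.eq_zero_of_mapClusterPt hε (by fun_prop)
      (fun t ht => by simpa using (hmem t).1 (sub_ne_zero.1 ht))
      (fun p => (htop p).continuousAt_comp hsub.continuousAt)
      (fun p => (hbot p).continuousAt_comp hsub.continuousAt)
    have hconst : y = fun _ => c := funext fun t => sub_eq_zero.1 (hzero t)
    rw [hconst]
    exact contDiff_const

end IsForcedSolution

section ResponseSolution

theorem exists_characteristic_rates {k ε : ℝ} (hk : 0 < k) (hε : 0 < ε)
    (hkε : 16 * k * ε ^ 2 ≤ 1) :
    ∃ a b, 0 < b ∧ 4 * b ≤ a ∧ a * b = k ∧ ε * (a + b) = 1 ∧ b ≤ 2 * k * ε := by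
  obtain ⟨s, hs0, hs⟩ : ∃ s, 0 ≤ s ∧ s ^ 2 = 1 - 4 * k * ε ^ 2 :=
    ⟨√(1 - 4 * k * ε ^ 2), Real.sqrt_nonneg _, Real.sq_sqrt (by linarith)⟩
  have hs1 : s < 1 := by nlinarith [mul_pos hk (pow_pos hε 2)]
  have hs35 : 3 / 5 ≤ s := by nlinarith
  have hprod : (1 + s) / (2 * ε) * ((1 - s) / (2 * ε)) = k := by
    field_simp
    linarith
  refine ⟨(1 + s) / (2 * ε), (1 - s) / (2 * ε), div_pos (by linarith) (by positivity), ?_, hprod,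
    by field_simp; ring, ?_⟩
  · rw [← mul_div_assoc]
    gcongr
    linarith
  · rw [div_le_iff₀ (by positivity)]
    nlinarith

theorem exists_eq_linear_add_lipschitz {g : ℝ → ℝ} {c : ℝ} {K : NNReal}
    (hg : AnalyticAt ℝ g c) (hK : 0 < K) :
    ∃ r > (0 : ℝ), ∃ q : ℝ → ℝ, LipschitzWith K q ∧
      (∀ u, |u| < r → g (c + u) = g c + deriv g c * u + q u) ∧
      ∃ p : FormalMultilinearSeries ℝ ℝ ℝ, HasFPowerSeriesOnBall q p 0 (ENNReal.ofReal r) := by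
  have hshift : AnalyticAt ℝ (fun u => g (c + u)) 0 :=
    AnalyticAt.fun_comp (by simpa using hg) (by fun_prop)
  have hderiv : HasDerivAt (fun u => g (c + u) - g c - deriv g c * u) 0 0 := by
    have hgc : HasDerivAt (fun u => g (c + u)) (deriv g c) 0 :=
      HasDerivAt.comp_const_add c 0 (by simpa using hg.differentiableAt.hasDerivAt)
    simpa using! (hgc.sub_const (g c)).fun_sub ((hasDerivAt_id 0).const_mul (deriv g c))
  obtain ⟨r, hr, q, hq, heq, hp⟩ := exists_lipschitzWith_hasFPowerSeriesOnBall
    ((hshift.sub analyticAt_const).sub (analyticAt_const.mul analyticAt_id)) hderiv.deriv hK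
  refine ⟨r, hr, q, hq, fun u hu => ?_, hp⟩
  rw [heq u hu]
  simp only [Pi.sub_apply, Pi.mul_apply, id]
  ring

theorem lipschitzOnWith_sub_mul_of_eq_linear_add {g q : ℝ → ℝ} {c k r : ℝ} {K : NNReal}
    (hq : LipschitzWith K q) (hg : ∀ u, |u| < r → g (c + u) = g c + k * u + q u) :
    LipschitzOnWith K (fun u => g u - k * u) (Metric.ball c r) := by
  have hlocal (u : ℝ) (hu : u ∈ Metric.ball c r) : g u - k * u = q (u - c) + (g c - k * c) := by
    have hgu := hg (u - c) hu
    rw [add_sub_cancel] at hgu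
    linarith
  refine LipschitzOnWith.of_dist_le_mul fun u hu v hv => ?_
  rw [hlocal u hu, hlocal v hv, dist_add_right]
  exact (hq.dist_le_mul _ _).trans_eq (by rw [dist_sub_right])

namespace IsResponse

variable {V : Type*} [NormedAddCommGroup V] [NormedSpace ℝ V] {ω : V} {a b : ℝ} {ha : 0 < a}
  {hb : 0 < b} {q : ℝ → ℝ} {K : NNReal} {hq : LipschitzWith K q} {h X W : V →ᵇ ℝ}

theorem deriv_const_add (hX : IsResponse ω ha hb hq h X W) (c : ℝ) :
    deriv (fun s : ℝ => c + X (s • ω)) = fun t => W (t • ω) - a * X (t • ω) :=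
  funext fun t => ((hX.hasDerivAt_left t).const_add c).deriv

theorem isForcedSolution (hX : IsResponse ω ha hb hq h X W) {ε c r : ℝ} {f : V → ℝ} {g : ℝ → ℝ}
    (hεab : ε * (a + b) = 1) (hg : ∀ u, |u| < r → g (c + u) = g c + a * b * u + q u)
    (hXr : ‖X‖ < r) (hh : ∀ ψ, h ψ = f ψ - g c) :
    IsForcedSolution ε g (fun t => f (t • ω)) (fun t => c + X (t • ω)) := fun t => by
  have hderiv2 := ((hX.hasDerivAt_right t).sub ((hX.hasDerivAt_left t).const_mul a)).deriv
  have hgX := hg (X (t • ω)) ((X.norm_coe_le_norm _).trans_lt hXr)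
  rw [hX.deriv_const_add c]
  change deriv (fun s : ℝ => W (s • ω) - a * X (s • ω)) t = _ at hderiv2
  rw [hderiv2, hgX, hh]
  linear_combination (-(W (t • ω) - a * X (t • ω))) * hεab

end IsResponse

variable {ι : Type*} [Fintype ι] [DecidableEq ι] {ε c : ℝ} {ω : ι → ℝ} {f X : (ι → ℝ) → ℝ}
  {g : ℝ → ℝ} {U : Set (ℝ × ℝ)}

/-- `x(t) = c + X(ωt)`, with `X` analytic and multiperiodic, solves
`ε x'' + x' + ε g(x) = ε f(ωt)`, its orbit `(x, x')` stays in the neighbourhood `U` of `(c, 0)`, and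
it attracts, together with its velocity, every `C²` solution starting in `U`. -/
structure IsAttractiveResponse (ε : ℝ) (ω : ι → ℝ) (f : (ι → ℝ) → ℝ) (g : ℝ → ℝ) (c : ℝ)
    (X : (ι → ℝ) → ℝ) (U : Set (ℝ × ℝ)) : Prop where
  analyticAt : ∀ ψ, AnalyticAt ℝ X ψ
  multiPeriodic : MultiPeriodic X
  isForcedSolution : IsForcedSolution ε g (fun t => f (t • ω)) fun t => c + X (t • ω)
  mem_nhds : U ∈ 𝓝 (c, 0)
  orbit_mem : ∀ t : ℝ, (c + X (t • ω), deriv (fun s : ℝ => c + X (s • ω)) t) ∈ U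
  tendsto : ∀ y : ℝ → ℝ, ContDiff ℝ 2 y → IsForcedSolution ε g (fun t => f (t • ω)) y →
    (y 0, deriv y 0) ∈ U → Tendsto (fun t : ℝ => |y t - (c + X (t • ω))| +
      |deriv y t - deriv (fun s : ℝ => c + X (s • ω)) t|) atTop (𝓝 0)

namespace IsAttractiveResponse

theorem eq_of_contDiff (hX : IsAttractiveResponse ε ω f g c X U) {Y : (ι → ℝ) → ℝ}
    (hY : Continuous Y) (hYper : MultiPeriodic Y) (hY2 : ContDiff ℝ 2 fun t : ℝ => c + Y (t • ω))
    (hYsol : IsForcedSolution ε g (fun t => f (t • ω)) fun t => c + Y (t • ω))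
    (hY0 : (c + Y 0, deriv (fun s : ℝ => c + Y (s • ω)) 0) ∈ U) (t : ℝ) :
    c + Y (t • ω) = c + X (t • ω) := by
  have hXc : Continuous X := continuous_iff_continuousAt.2 fun ψ => (hX.analyticAt ψ).continuousAt
  have hper : MultiPeriodic fun ψ => |Y ψ - X ψ| := fun ψ i => by
    simp only [hYper ψ i, hX.multiPeriodic ψ i]
  have hlim := hX.tendsto _ hY2 hYsol (by simpa using hY0)
  have hdist : Tendsto (fun t : ℝ => |Y (t • ω) - X (t • ω)|) atTop (𝓝 0) :=
    squeeze_zero (fun _ => abs_nonneg _) (fun t => by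
      rw [add_sub_add_left_eq_sub]
      exact le_add_of_nonneg_right (abs_nonneg _)) hlim
  have heq := hper.eq_of_tendsto_smul (by fun_prop) hdist t
  rw [sub_eq_zero.1 (abs_eq_zero.1 heq)]

theorem exists_subset_eq_of_continuous (hX : IsAttractiveResponse ε ω f g c X U) (hε : 0 < ε)
    (hf : Continuous f) {k : ℝ} (hg : HasDerivAt g k c) (hk : k ∈ Set.Ioo 0 (1 / (4 * ε ^ 2))) :
    ∃ U' ⊆ U, U' ∈ 𝓝 (c, 0) ∧ ∀ Y : (ι → ℝ) → ℝ, Continuous Y → MultiPeriodic Y →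
      IsForcedSolution ε g (fun t => f (t • ω)) (fun t => c + Y (t • ω)) →
      (∀ t : ℝ, (c + Y (t • ω), deriv (fun s : ℝ => c + Y (s • ω)) t) ∈ U') →
      ∀ t : ℝ, c + Y (t • ω) = c + X (t • ω) := by
  obtain ⟨U₂, hU₂, hreg⟩ := IsForcedSolution.exists_nhds_forall_contDiff hε
    (F := fun t => f (t • ω)) (by fun_prop) hg hk
  refine ⟨U ∩ U₂, Set.inter_subset_left, inter_mem hX.mem_nhds hU₂,
    fun Y hY hYper hYsol hYmem => ?_⟩
  have hper : MultiPeriodic fun ψ => c + Y ψ := fun ψ i => by simp only [hYper ψ i]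
  have hcont : Continuous fun ψ => c + Y ψ := by fun_prop
  have hY2 : ContDiff ℝ 2 fun t : ℝ => c + Y (t • ω) :=
    hreg _ (by fun_prop) hYsol (fun p => hper.mapClusterPt_smul_atTop hcont ω p)
      (fun p => by
        simpa only [smul_neg, neg_smul] using hper.mapClusterPt_smul_atTop hcont (-ω) p)
      fun t => (hYmem t).2
  exact hX.eq_of_contDiff hY hYper hY2 hYsol (by simpa using (hYmem 0).1)

end IsAttractiveResponse

namespace IsResponse

variable {a b r : ℝ} {ha : 0 < a} {hb : 0 < b} {q : ℝ → ℝ} {K : NNReal} {hq : LipschitzWith K q}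
  {h X W : (ι → ℝ) →ᵇ ℝ} {p : FormalMultilinearSeries ℝ ℝ ℝ}

theorem multiPeriodic (hX : IsResponse ω ha hb hq h X W) (hK : K < a * b) (hh : MultiPeriodic h) :
    MultiPeriodic X := fun ψ i =>
  DFunLike.congr_fun (hX.translateBCF_eq hK (BoundedContinuousFunction.ext fun ψ => hh ψ i)) ψ

theorem analyticAt_of_multiPeriodic (hX : IsResponse ω ha hb hq h X W) (hK : K < a * b)
    (hper : MultiPeriodic h) (hh : ∀ ψ, AnalyticAt ℝ h ψ)
    (hp : HasFPowerSeriesOnBall q p 0 (ENNReal.ofReal r)) (hXr : ‖X‖ < r) (ψ : ι → ℝ) :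
    AnalyticAt ℝ X ψ := by
  obtain ⟨_, _, _, hC⟩ := hper.exists_hasCauchyBoundAt hh
  exact hX.analyticAt hK (analyticAt_translateBCF hC) hp hXr ψ

theorem isAttractiveResponse {σ : ℝ} (hX : IsResponse ω ha hb hq h X W) (hε : 0 < ε)
    (hεab : ε * (a + b) = 1) (hab : 4 * b ≤ a) (hK : 4 * K ≤ a * b)
    (hg : ∀ u, |u| < r → g (c + u) = g c + a * b * u + q u)
    (hp : HasFPowerSeriesOnBall q p 0 (ENNReal.ofReal r)) (hf : ∀ ψ, AnalyticAt ℝ f ψ)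
    (hfper : MultiPeriodic f) (hh : ∀ ψ, h ψ = f ψ - g c)
    (hσ : 0 < σ) (hσr : 74 * σ < r) (hhσ : ‖flowResolventCLM ω hb h‖ ≤ a * σ) :
    IsAttractiveResponse ε ω f g c X (Metric.ball c (5 * σ) ×ˢ Metric.ball 0 (5 * (a * σ))) := by
  have hq0 : q 0 = 0 := by simpa using hg 0 (by rw [abs_zero]; linarith)
  have hKab : K < a * b := by nlinarith [mul_pos ha hb, K.coe_nonneg]
  have hhper : MultiPeriodic h := fun ψ i => by rw [hh, hh, hfper ψ i]
  have hXσ := hX.norm_le_two_mul hq0 hK hhσ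
  have hXr : ‖X‖ < r := by linarith
  have hdist (t : ℝ) : |c + X (t • ω) - c| ≤ 2 * σ := by
    rw [add_sub_cancel_left]
    exact (X.norm_coe_le_norm _).trans hXσ
  have hspeed (t : ℝ) : |deriv (fun s : ℝ => c + X (s • ω)) t| ≤ 4 * (a * σ) := by
    rw [hX.deriv_const_add c]
    exact hX.abs_velocity_le hq0 hK hhσ _
  have hXan := hX.analyticAt_of_multiPeriodic hKab hhper
    (fun ψ => funext hh ▸ (hf ψ).sub analyticAt_const) hp hXr
  have hXsol := hX.isForcedSolution hεab hg hXr hh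
  refine ⟨hXan, hX.multiPeriodic hKab hhper, hXsol, ?_, fun t => ?_, fun y hy2 hy hy0 => ?_⟩
  · exact prod_mem_nhds (Metric.ball_mem_nhds _ (by positivity))
      (Metric.ball_mem_nhds _ (by positivity))
  · simp only [Set.mem_prod, Metric.mem_ball, Real.dist_eq, sub_zero]
    constructor <;> nlinarith [hdist t, hspeed t, mul_pos ha hσ]
  · simp only [Set.mem_prod, Metric.mem_ball, Real.dist_eq, sub_zero] at hy0
    have hx2 : ContDiff ℝ 2 fun t : ℝ => c + X (t • ω) :=
      contDiff_const.add ((contDiff_iff_contDiffAt.2 fun ψ => (hXan ψ).contDiffAt).comp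
        (contDiff_id.smul contDiff_const))
    have hpos0 := abs_sub_le (y 0) c (c + X ((0 : ℝ) • ω))
    rw [abs_sub_comm c] at hpos0
    have hvel0 := abs_sub (deriv y 0) (deriv (fun s : ℝ => c + X (s • ω)) 0)
    obtain ⟨hpos, hvel⟩ := hXsol.tendsto_sub_of_lipschitzOnWith hy hx2 hy2 hε hεab hb hab
      (lipschitzOnWith_sub_mul_of_eq_linear_add hq hg) hK (ρ := 72 * σ) (by positivity)
      (by linarith) hdist (by linarith [hdist 0]) (by linarith [hspeed 0])
    simpa using hpos.abs.add hvel.abs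

end IsResponse

end ResponseSolution

section Main

theorem HasUniformAbelMean.eventually_norm_flowResolventCLM_le {V E : Type*} [NormedAddCommGroup V]
    [NormedSpace ℝ V] [NormedAddCommGroup E] [NormedSpace ℝ E] {ω : V} {h : V →ᵇ E}
    (hh : HasUniformAbelMean ω h 0) {δ : ℝ} (hδ : 0 < δ) :
    ∀ᶠ b in 𝓝[>] (0 : ℝ), ∀ hb : 0 < b, b * ‖flowResolventCLM ω hb h‖ ≤ δ := by
  filter_upwards [Metric.tendstoUniformly_iff.1 hh δ hδ] with b hclose hb
  have hnorm : b * ‖flowResolventCLM ω hb h‖ = ‖b • flowResolventCLM ω hb h‖ := by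
    rw [norm_smul, Real.norm_of_nonneg hb.le]
  rw [hnorm]
  refine (BoundedContinuousFunction.norm_le hδ.le).2 fun ψ => ?_
  simpa using (hclose ψ).le

variable {ι : Type*} [Fintype ι] [DecidableEq ι] {ω : ι → ℝ} {f : (ι → ℝ) → ℝ} {g : ℝ → ℝ} {c₀ : ℝ}

theorem MultiPeriodic.exists_bcf_eq_sub_mean
    (hω : ∀ ν : ι → ℤ, ν ≠ 0 → ∑ i, ω i * (ν i : ℝ) ≠ 0) (hf : MultiPeriodic f)
    (hfc : Continuous f) {m : ℝ} (hm : m = ((2 * Real.pi) ^ Fintype.card ι)⁻¹ *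
      ∫ ψ in Set.Icc (0 : ι → ℝ) (fun _ => 2 * Real.pi), f ψ) :
    ∃ h : (ι → ℝ) →ᵇ ℝ, (∀ ψ, h ψ = f ψ - m) ∧ HasUniformAbelMean ω h 0 := by
  obtain ⟨C, hC⟩ := hf.exists_norm_le hfc
  let F : (ι → ℝ) →ᵇ ℝ := BoundedContinuousFunction.ofNormedAddCommGroup f hfc C hC
  refine ⟨F + BoundedContinuousFunction.const _ (-m), fun ψ => (sub_eq_add_neg _ _).symm, ?_⟩
  have hF : HasUniformAbelMean ω F m := hm ▸ hf.hasUniformAbelMean hω hfc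
  simpa using hF.add (G := BoundedContinuousFunction.const _ (-m)) (hasUniformAbelMean_const ω (-m))

theorem eventually_exists_isAttractiveResponse
    (hω : ∀ ν : ι → ℤ, ν ≠ 0 → ∑ i, ω i * (ν i : ℝ) ≠ 0) (hf : ∀ ψ, AnalyticAt ℝ f ψ)
    (hfper : MultiPeriodic f) (hg : AnalyticAt ℝ g c₀)
    (hmean : g c₀ = ((2 * Real.pi) ^ Fintype.card ι)⁻¹ *
      ∫ ψ in Set.Icc (0 : ι → ℝ) (fun _ => 2 * Real.pi), f ψ)
    (hpos : 0 < deriv g c₀) :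
    ∀ᶠ ε in 𝓝[>] (0 : ℝ), ∃ X U, IsAttractiveResponse ε ω f g c₀ X U := by
  set k := deriv g c₀
  obtain ⟨h, hh, hh0⟩ := hfper.exists_bcf_eq_sub_mean hω
    (continuous_iff_continuousAt.2 fun ψ => (hf ψ).continuousAt) hmean
  obtain ⟨r, hr, q, hq, hgq, p, hp⟩ :=
    exists_eq_linear_add_lipschitz hg (K := (k / 4).toNNReal) (by simpa using hpos)
  obtain ⟨b₀, hb₀, hsmall⟩ := mem_nhdsGT_iff_exists_Ioo_subset.1
    (hh0.eventually_norm_flowResolventCLM_le (δ := k * (r / 100)) (by positivity))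
  have hdisc : ∀ᶠ ε in 𝓝[>] (0 : ℝ), 16 * k * ε ^ 2 < 1 :=
    nhdsWithin_le_nhds (ContinuousAt.eventually_lt (by fun_prop) continuousAt_const (by simp))
  have hslow : ∀ᶠ ε in 𝓝[>] (0 : ℝ), 2 * k * ε < b₀ :=
    nhdsWithin_le_nhds
      (ContinuousAt.eventually_lt (by fun_prop) continuousAt_const (by simpa using hb₀))
  filter_upwards [self_mem_nhdsWithin, hdisc, hslow] with ε (hε : 0 < ε) hdiscε hslowε
  obtain ⟨a, b, hb, hab, habk, hεab, hbk⟩ := exists_characteristic_rates hpos hε hdiscε.le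
  have ha : 0 < a := by linarith
  have hK : 4 * ((k / 4).toNNReal : ℝ) = a * b := by
    rw [Real.coe_toNNReal _ (by positivity), habk]
    ring
  have hforce : ‖flowResolventCLM ω hb h‖ ≤ a * (r / 100) := by
    have hbound : b * ‖flowResolventCLM ω hb h‖ ≤ k * (r / 100) := hsmall ⟨hb, by linarith⟩ hb
    rw [← habk] at hbound
    exact le_of_mul_le_mul_left (hbound.trans_eq (by ring)) hb
  obtain ⟨X, W, hX⟩ := exists_isResponse ω ha hb hq (by linarith [mul_pos ha hb]) h
  exact ⟨X, _, hX.isAttractiveResponse hε hεab hab hK.le (by rwa [habk]) hp hf hfper hh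
    (by positivity) (by linarith) hforce⟩

theorem response_solution_attractive_general
    (hω : ∀ ν : ι → ℤ, ν ≠ 0 → ∑ i, ω i * (ν i : ℝ) ≠ 0) (hf : ∀ ψ, AnalyticAt ℝ f ψ)
    (hfper : MultiPeriodic f) (hg : AnalyticAt ℝ g c₀)
    (hmean : g c₀ = ((2 * Real.pi) ^ Fintype.card ι)⁻¹ *
      ∫ ψ in Set.Icc (0 : ι → ℝ) (fun _ => 2 * Real.pi), f ψ)
    (hpos : 0 < deriv g c₀) :
    ∀ᶠ ε in 𝓝[>] (0 : ℝ), ∃ X U, IsAttractiveResponse ε ω f g c₀ X U ∧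
      (∀ Y : (ι → ℝ) → ℝ, Continuous Y → MultiPeriodic Y →
        ContDiff ℝ 2 (fun t : ℝ => c₀ + Y (t • ω)) →
        IsForcedSolution ε g (fun t => f (t • ω)) (fun t => c₀ + Y (t • ω)) →
        (c₀ + Y 0, deriv (fun s : ℝ => c₀ + Y (s • ω)) 0) ∈ U →
        ∀ t : ℝ, c₀ + Y (t • ω) = c₀ + X (t • ω)) ∧
      ∃ U' ⊆ U, U' ∈ 𝓝 (c₀, 0) ∧ ∀ Y : (ι → ℝ) → ℝ, Continuous Y → MultiPeriodic Y →
        IsForcedSolution ε g (fun t => f (t • ω)) (fun t => c₀ + Y (t • ω)) →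
        (∀ t : ℝ, (c₀ + Y (t • ω), deriv (fun s : ℝ => c₀ + Y (s • ω)) t) ∈ U') →
        ∀ t : ℝ, c₀ + Y (t • ω) = c₀ + X (t • ω) := by
  have hdisc : ∀ᶠ ε in 𝓝[>] (0 : ℝ), deriv g c₀ * (4 * ε ^ 2) < 1 :=
    nhdsWithin_le_nhds (ContinuousAt.eventually_lt (by fun_prop) continuousAt_const (by simp))
  filter_upwards [self_mem_nhdsWithin, hdisc,
    eventually_exists_isAttractiveResponse hω hf hfper hg hmean hpos]
    with ε (hε : 0 < ε) hdiscε ⟨X, U, hX⟩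
  exact ⟨X, U, hX, fun Y => hX.eq_of_contDiff, hX.exists_subset_eq_of_continuous hε
    (continuous_iff_continuousAt.2 fun ψ => (hf ψ).continuousAt) hg.differentiableAt.hasDerivAt
    ⟨hpos, (lt_div_iff₀ (by positivity)).2 hdiscε⟩⟩

end Main

/-- **Existence, local attractivity and uniqueness of the response solution when `g'(c₀) > 0`.**
For nonresonant `ω`, analytic periodic forcing `f` with mean `f₀`, analytic `g` with
`g(c₀) = f₀` and `g'(c₀) > 0`, for every small `ε > 0` there is a quasi-periodic solution
`x₀(t) = c₀ + X ε (t • ω)` of `ε x'' + x' + ε g(x) = ε f(ωt)` which is locally attractive: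
every solution starting in a suitable neighbourhood `U` of `(c₀, 0)` in the `(x, x')`-plane
converges to it, and `x₀` is the only quasi-periodic solution whose orbit stays in `U`. -/
theorem response_solution_attractive
    (d : ℕ) (hd : 1 ≤ d) (ω : Fin d → ℝ)
    (hω : ∀ ν : Fin d → ℤ, ν ≠ 0 → (∑ i, ω i * (ν i : ℝ)) ≠ 0)
    (f : (Fin d → ℝ) → ℝ) (g : ℝ → ℝ)
    (hf : ∀ ψ : Fin d → ℝ, AnalyticAt ℝ f ψ)
    (hfper : ∀ (ψ : Fin d → ℝ) (i : Fin d), f (ψ + Pi.single i (2 * Real.pi)) = f ψ)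
    (hg : ∀ x : ℝ, AnalyticAt ℝ g x)
    (f₀ : ℝ)
    (hf₀ : f₀ = ((2 * Real.pi) ^ d)⁻¹ *
      ∫ ψ in Set.Icc (0 : Fin d → ℝ) (fun _ => 2 * Real.pi), f ψ)
    (c₀ : ℝ) (hzero : g c₀ = f₀) (hpos : 0 < deriv g c₀) :
    ∃ ε₀ > (0 : ℝ), ∃ X : ℝ → (Fin d → ℝ) → ℝ,
      ∀ ε : ℝ, 0 < ε → ε < ε₀ →
        (∀ ψ : Fin d → ℝ, AnalyticAt ℝ (X ε) ψ) ∧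
        (∀ (ψ : Fin d → ℝ) (i : Fin d), X ε (ψ + Pi.single i (2 * Real.pi)) = X ε ψ) ∧
        (∀ t : ℝ,
          ε * deriv (deriv (fun s : ℝ => c₀ + X ε (s • ω))) t
            + deriv (fun s : ℝ => c₀ + X ε (s • ω)) t
            + ε * g (c₀ + X ε (t • ω))
            = ε * f (t • ω)) ∧
        ∃ U : Set (ℝ × ℝ), U ∈ nhds ((c₀, 0) : ℝ × ℝ) ∧
          -- local attractivity: any solution starting in `U` converges to `x₀`
          (∀ y : ℝ → ℝ, ContDiff ℝ 2 y →
            (∀ t : ℝ, ε * deriv (deriv y) t + deriv y t + ε * g (y t) = ε * f (t • ω)) →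
            (y 0, deriv y 0) ∈ U →
            Tendsto
              (fun t : ℝ =>
                |y t - (c₀ + X ε (t • ω))| +
                |deriv y t - deriv (fun s : ℝ => c₀ + X ε (s • ω)) t|)
              atTop (nhds 0)) ∧
          -- uniqueness among quasi-periodic solutions whose orbit stays in `U`
          (∀ Y : (Fin d → ℝ) → ℝ, Continuous Y →
            (∀ (ψ : Fin d → ℝ) (i : Fin d), Y (ψ + Pi.single i (2 * Real.pi)) = Y ψ) →
            (∀ t : ℝ,
              ε * deriv (deriv (fun s : ℝ => c₀ + Y (s • ω))) t
                + deriv (fun s : ℝ => c₀ + Y (s • ω)) t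
                + ε * g (c₀ + Y (t • ω))
                = ε * f (t • ω)) →
            (∀ t : ℝ,
              ((c₀ + Y (t • ω), deriv (fun s : ℝ => c₀ + Y (s • ω)) t) : ℝ × ℝ) ∈ U) →
            ∀ t : ℝ, c₀ + Y (t • ω) = c₀ + X ε (t • ω)) := by
  obtain ⟨ε₀, hε₀, hsmall⟩ := mem_nhdsGT_iff_exists_Ioo_subset.1
    (response_solution_attractive_general hω hf hfper (hg c₀)
      (by rw [hzero, hf₀, Fintype.card_fin]) hpos)
  choose! X U hX _ U' hU'U hU' huniq using fun ε (hε : ε ∈ Set.Ioo 0 ε₀) => hsmall hε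
  refine ⟨ε₀, hε₀, X, fun ε hε hεε₀ => ?_⟩
  have hXε := hX ε ⟨hε, hεε₀⟩
  exact ⟨hXε.analyticAt, hXε.multiPeriodic, hXε.isForcedSolution, U' ε, hU' ε ⟨hε, hεε₀⟩,
    fun y hy2 hy hy0 => hXε.tendsto y hy2 hy (hU'U ε ⟨hε, hεε₀⟩ hy0), huniq ε ⟨hε, hεε₀⟩⟩
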